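/- arXiv:2402.11479 — 3 statements merged into one kernel-verified Lean document; each statement's English description precedes it below -/
import Mathlib

section
/- Let R be a finite-dimensional complex solvable Lie superalgebra with nilradical N such that R² ⊆ N. Then dim(R/N) ≤ dim(N/N²). -/
/-!
The even part of `L` acts on `V = N / [N, N]` through `z ↦ [·, z]`. Since `[L, L] ⊆ N` and `N` acts
trivially on `V`, these operators commute. By simultaneous triangularization, a subspace `K` of the
even part, of codimension at most `dim V`, acts on `V` by nilpotent operators
(`exists_nilpotent_subspace`).

Let `D k` be the lower central series of `N`. An even `x` acting nilpotently on `V = D 0 / D 1` acts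
nilpotently on each `D k / D (k+1)`, by the Leibniz rule (`ad_pow_even`). An odd `x` acts on each of
these quotients with square zero, because `2 [[u, x], x] = [u, [x, x]]` and
`[x, x] ∈ N` (`ad_sq_odd`). In both cases `N + ℂ x` is a nilpotent graded ideal, hence `x ∈ N` by
maximality of the nilradical (`mem_nilradical`).

Thus `N` contains `K ⊕ L₁`, and `dim (L / N) ≤ dim L₀ - dim K ≤ dim V`.
-/

open Submodule Module

/-- A Lie superalgebra structure over `ℂ` on the module `L`: a ℤ₂-grading
`L = even ⊕ odd`, together with a grading-preserving bilinear bracket which is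
super skew-symmetric and satisfies the super Jacobi identity on homogeneous
elements. -/
structure SuperAlg (L : Type) [AddCommGroup L] [Module ℂ L] : Type where
  bracket : L →ₗ[ℂ] L →ₗ[ℂ] L
  even : Submodule ℂ L
  odd : Submodule ℂ L
  grading_sup : even ⊔ odd = ⊤
  grading_inf : even ⊓ odd = ⊥
  bk_ee : ∀ x ∈ even, ∀ y ∈ even, bracket x y ∈ even
  bk_eo : ∀ x ∈ even, ∀ y ∈ odd, bracket x y ∈ odd
  bk_oe : ∀ x ∈ odd, ∀ y ∈ even, bracket x y ∈ odd
  bk_oo : ∀ x ∈ odd, ∀ y ∈ odd, bracket x y ∈ even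
  skew_e : ∀ x y : L, (x ∈ even ∨ y ∈ even) → bracket x y = - bracket y x
  skew_oo : ∀ x ∈ odd, ∀ y ∈ odd, bracket x y = bracket y x
  jacobi : ∀ (dx dy dz : Bool) (x y z : L),
      x ∈ (if dx then odd else even) → y ∈ (if dy then odd else even) →
      z ∈ (if dz then odd else even) →
      (if dx && dz then (-1 : ℂ) else 1) • bracket x (bracket y z) +
      (if dx && dy then (-1 : ℂ) else 1) • bracket y (bracket z x) +
      (if dy && dz then (-1 : ℂ) else 1) • bracket z (bracket x y) = 0

namespace SuperAlg

variable {L : Type} [AddCommGroup L] [Module ℂ L] (S : SuperAlg L)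

/-- The subspace `[A, B]` spanned by brackets of elements of `A` and `B`. -/
def bk (A B : Submodule ℂ L) : Submodule ℂ L := Submodule.map₂ S.bracket A B

/-- The descending central series of a subalgebra `A`:
`C¹(A) = A`, `C^{k+1}(A) = [C^k(A), A]`. -/
def lcsIn (A : Submodule ℂ L) : ℕ → Submodule ℂ L
  | 0 => A
  | k + 1 => S.bk (lcsIn A k) A

/-- The derived series of a subalgebra `A`:
`A^{[1]} = A`, `A^{[k+1]} = [A^{[k]}, A^{[k]}]`. -/
def dsIn (A : Submodule ℂ L) : ℕ → Submodule ℂ L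
  | 0 => A
  | k + 1 => S.bk (dsIn A k) (dsIn A k)

/-- The square `L² = [L, L]`. -/
def sq : Submodule ℂ L := S.bk ⊤ ⊤

/-- Nilpotency: the descending central series vanishes eventually. -/
def IsNilpotent : Prop := ∃ s, S.lcsIn ⊤ s = ⊥

/-- Solvability: the derived series vanishes eventually. -/
def IsSolvable : Prop := ∃ k, S.dsIn ⊤ k = ⊥

/-- `A` is an ideal. -/
def IsIdeal (A : Submodule ℂ L) : Prop := S.bk A ⊤ ≤ A

/-- `A` is a graded subspace. -/
def IsGraded (A : Submodule ℂ L) : Prop := (A ⊓ S.even) ⊔ (A ⊓ S.odd) = A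

/-- `N` is the nilradical: the greatest nilpotent graded ideal. -/
def IsNilradical (N : Submodule ℂ L) : Prop :=
  (S.IsGraded N ∧ S.IsIdeal N ∧ ∃ s, S.lcsIn N s = ⊥) ∧
  ∀ A : Submodule ℂ L, S.IsGraded A → S.IsIdeal A → (∃ s, S.lcsIn A s = ⊥) → A ≤ N

/-- `R` is the radical: the greatest solvable graded ideal. -/
def IsRadical (R : Submodule ℂ L) : Prop :=
  (S.IsGraded R ∧ S.IsIdeal R ∧ ∃ k, S.dsIn R k = ⊥) ∧
  ∀ A : Submodule ℂ L, S.IsGraded A → S.IsIdeal A → (∃ k, S.dsIn A k = ⊥) → A ≤ R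

/-- `d` is an even superderivation. -/
def IsEvenDer (d : L →ₗ[ℂ] L) : Prop :=
  (∀ x ∈ S.even, d x ∈ S.even) ∧ (∀ x ∈ S.odd, d x ∈ S.odd) ∧
  ∀ x y : L, d (S.bracket x y) = S.bracket (d x) y + S.bracket x (d y)

/-- `d` is an odd superderivation. -/
def IsOddDer (d : L →ₗ[ℂ] L) : Prop :=
  (∀ x ∈ S.even, d x ∈ S.odd) ∧ (∀ x ∈ S.odd, d x ∈ S.even) ∧
  (∀ x ∈ S.even, ∀ y : L, d (S.bracket x y) = S.bracket (d x) y + S.bracket x (d y)) ∧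
  (∀ x ∈ S.odd, ∀ y : L, d (S.bracket x y) = S.bracket (d x) y - S.bracket x (d y))

/-- The inner superderivation `ad a : y ↦ [y, a]`. -/
def ad (a : L) : L →ₗ[ℂ] L := S.bracket.flip a

/-- An endomorphism is diagonalizable if its eigenspaces span. -/
def IsDiagonalizable (f : Module.End ℂ L) : Prop :=
  (⨆ μ : ℂ, Module.End.eigenspace f μ) = ⊤

/-- A torus on `S`: a commutative subalgebra of the even superderivations
consisting of diagonalizable endomorphisms. -/
def IsTorus (T : Submodule ℂ (L →ₗ[ℂ] L)) : Prop :=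
  (∀ d ∈ T, S.IsEvenDer d) ∧
  (∀ d ∈ T, ∀ d' ∈ T, d ∘ₗ d' = d' ∘ₗ d) ∧
  (∀ d ∈ T, IsDiagonalizable d)

/-- A maximal torus. -/
def IsMaxTorus (T : Submodule ℂ (L →ₗ[ℂ] L)) : Prop :=
  S.IsTorus T ∧ ∀ T' : Submodule ℂ (L →ₗ[ℂ] L), S.IsTorus T' → T ≤ T' → T' = T

/-- A nilpotent Lie superalgebra is of maximal rank if a maximal torus has
dimension `dim (L / L²)`. -/
def IsMaxRank : Prop :=
  ∃ T : Submodule ℂ (L →ₗ[ℂ] L), S.IsMaxTorus T ∧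
    Module.finrank ℂ ↥T = Module.finrank ℂ (L ⧸ S.sq)

/-- `ι : N → L` is an embedding of Lie superalgebras (injective, bracket- and
grading-preserving). -/
def IsEmbedding {N : Type} [AddCommGroup N] [Module ℂ N]
    (SN : SuperAlg N) (ι : N →ₗ[ℂ] L) : Prop :=
  Function.Injective ι ∧
  (∀ x y : N, ι (SN.bracket x y) = S.bracket (ι x) (ι y)) ∧
  SN.even.map ι = S.even ⊓ LinearMap.range ι ∧
  SN.odd.map ι = S.odd ⊓ LinearMap.range ι

/-- `S` (on `L`) is a maximal solvable extension of the nilpotent Lie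
superalgebra `SN` (on `N`, embedded via `ι` as the nilradical): `S` is solvable
with nilradical `ι(N)`, and among all such solvable extensions the codimension
of the nilradical is maximal. -/
def IsMaxSolvExt {N : Type} [AddCommGroup N] [Module ℂ N]
    (SN : SuperAlg N) (ι : N →ₗ[ℂ] L) : Prop :=
  S.IsSolvable ∧ S.IsEmbedding SN ι ∧ S.IsNilradical (LinearMap.range ι) ∧
  ∀ (L' : Type) [AddCommGroup L'] [Module ℂ L'] [FiniteDimensional ℂ L']
    (S' : SuperAlg L') (ι' : N →ₗ[ℂ] L'),
      S'.IsSolvable → S'.IsEmbedding SN ι' → S'.IsNilradical (LinearMap.range ι') →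
      Module.finrank ℂ (L' ⧸ LinearMap.range ι') ≤
        Module.finrank ℂ (L ⧸ LinearMap.range ι)

/-- `S` (on `L`) is isomorphic to the semidirect product `R_T = N ⊕ T` of the
nilpotent Lie superalgebra `SN` (embedded via `ι` as the nilradical) with a
torus `T` of `SN`, the bracket being given by `[x, d] = d x`, `[d, d'] = 0`:
there is an even complement `Q` to `ι(N)` with `[Q, Q] = 0` such that
restriction of the adjoint action to `N` is a linear isomorphism of `Q` onto
`T`. -/
def IsRT {N : Type} [AddCommGroup N] [Module ℂ N]
    (_SN : SuperAlg N) (ι : N →ₗ[ℂ] L) (T : Submodule ℂ (N →ₗ[ℂ] N)) : Prop :=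
  ∃ (Q : Submodule ℂ L) (f : ↥Q →ₗ[ℂ] (N →ₗ[ℂ] N)),
    Q ≤ S.even ∧ Q ⊓ LinearMap.range ι = ⊥ ∧ Q ⊔ LinearMap.range ι = ⊤ ∧
    S.bk Q Q = ⊥ ∧
    (∀ (z : ↥Q) (n : N), ι (f z n) = S.bracket (ι n) (z : L)) ∧
    Function.Injective f ∧
    LinearMap.range f = T

end SuperAlg

namespace SuperAlg

variable {L : Type} [AddCommGroup L] [Module ℂ L] (S : SuperAlg L)

/-! ### Homogeneous elements and graded subspaces -/

/-- `x` is homogeneous: even or odd (`0` is both). -/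
def Hom (x : L) : Prop := x ∈ S.even ∨ x ∈ S.odd

variable {S}

lemma Hom.bracket {a b : L} (ha : S.Hom a) (hb : S.Hom b) : S.Hom (S.bracket a b) := by
  rcases ha with ha | ha <;> rcases hb with hb | hb
  · exact Or.inl (S.bk_ee a ha b hb)
  · exact Or.inr (S.bk_eo a ha b hb)
  · exact Or.inr (S.bk_oe a ha b hb)
  · exact Or.inl (S.bk_oo a ha b hb)

lemma swap_mem {a b : L} (ha : S.Hom a) (hb : S.Hom b) {P : Submodule ℂ L}
    (h : S.bracket a b ∈ P) : S.bracket b a ∈ P := by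
  rcases ha with ha | ha
  · rw [S.skew_e b a (Or.inr ha)]; exact P.neg_mem h
  rcases hb with hb | hb
  · rw [S.skew_e b a (Or.inl hb)]; exact P.neg_mem h
  · rw [S.skew_oo b hb a ha]; exact h

/-- The Jacobi identity with its signs forgotten: on homogeneous elements, a subspace containing
two of the three cyclic terms contains the third. -/
lemma jacobi_mem {a b c : L} (ha : S.Hom a) (hb : S.Hom b) (hc : S.Hom c) {P : Submodule ℂ L}
    (h₁ : S.bracket b (S.bracket c a) ∈ P) (h₂ : S.bracket c (S.bracket a b) ∈ P) :
    S.bracket a (S.bracket b c) ∈ P := by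
  have key : ∀ dx dy dz : Bool, a ∈ (if dx then S.odd else S.even) →
      b ∈ (if dy then S.odd else S.even) → c ∈ (if dz then S.odd else S.even) →
      S.bracket a (S.bracket b c) ∈ P := by
    intro dx dy dz hx hy hz
    have hj := S.jacobi dx dy dz a b c hx hy hz
    rw [add_assoc] at hj
    have hs : (if dx && dz then (-1 : ℂ) else 1) • S.bracket a (S.bracket b c) ∈ P := by
      rw [eq_neg_of_add_eq_zero_left hj]
      exact P.neg_mem (P.add_mem (P.smul_mem _ h₁) (P.smul_mem _ h₂))
    refine (P.smul_mem_iff ?_).1 hs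
    split_ifs <;> norm_num
  have hd : ∀ x : L, S.Hom x → ∃ d : Bool, x ∈ (if d then S.odd else S.even) := by
    rintro x (h | h)
    · exact ⟨false, by simpa using h⟩
    · exact ⟨true, by simpa using h⟩
  obtain ⟨dx, hx⟩ := hd a ha
  obtain ⟨dy, hy⟩ := hd b hb
  obtain ⟨dz, hz⟩ := hd c hc
  exact key dx dy dz hx hy hz

lemma IsGraded.le_of_hom {A P : Submodule ℂ L} (hA : S.IsGraded A)
    (h : ∀ a ∈ A, S.Hom a → a ∈ P) : A ≤ P := by
  rw [← hA]
  exact sup_le (fun a ha => h a ha.1 (Or.inl ha.2)) (fun a ha => h a ha.1 (Or.inr ha.2))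

lemma isGraded_of_le {A : Submodule ℂ L} (h : A ≤ (A ⊓ S.even) ⊔ (A ⊓ S.odd)) : S.IsGraded A :=
  le_antisymm (sup_le inf_le_left inf_le_left) h

lemma mem_of_hom {A : Submodule ℂ L} {a : L} (ha : a ∈ A) (h : S.Hom a) :
    a ∈ (A ⊓ S.even) ⊔ (A ⊓ S.odd) := by
  rcases h with h | h
  · exact mem_sup_left ⟨ha, h⟩
  · exact mem_sup_right ⟨ha, h⟩

lemma isGraded_top : S.IsGraded ⊤ := by
  simp [IsGraded, S.grading_sup]

lemma bk_le_of_hom {A B P : Submodule ℂ L} (hA : S.IsGraded A) (hB : S.IsGraded B)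
    (h : ∀ a ∈ A, S.Hom a → ∀ b ∈ B, S.Hom b → S.bracket a b ∈ P) : S.bk A B ≤ P := by
  refine map₂_le.2 fun a ha b hb => ?_
  have h₁ : ∀ b ∈ B, S.Hom b → A ≤ P.comap (S.ad b) := fun b hb hb' =>
    hA.le_of_hom fun a ha ha' => h a ha ha' b hb hb'
  have h₂ : B ≤ P.comap (S.bracket a) := hB.le_of_hom fun b hb hb' => h₁ b hb hb' ha
  exact h₂ hb

lemma mem_bk {A B : Submodule ℂ L} {a b : L} (ha : a ∈ A) (hb : b ∈ B) :
    S.bracket a b ∈ S.bk A B := apply_mem_map₂ _ ha hb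

lemma IsGraded.bk {A B : Submodule ℂ L} (hA : S.IsGraded A) (hB : S.IsGraded B) :
    S.IsGraded (S.bk A B) :=
  isGraded_of_le <| bk_le_of_hom hA hB fun _ ha ha' _ hb hb' =>
    mem_of_hom (mem_bk ha hb) (ha'.bracket hb')

lemma IsGraded.lcsIn {A : Submodule ℂ L} (hA : S.IsGraded A) : ∀ k, S.IsGraded (S.lcsIn A k)
  | 0 => hA
  | k + 1 => (IsGraded.lcsIn hA k).bk hA

/-- For even `x`, the operator `[·, x]` is a derivation in the unsigned sense. -/
lemma ad_even {x : L} (hx : x ∈ S.even) (u v : L) :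
    S.ad x (S.bracket u v) = S.bracket (S.ad x u) v + S.bracket u (S.ad x v) := by
  -- all four parity combinations, extended bilinearly
  have hee : ∀ u ∈ S.even, ∀ v ∈ S.even,
      S.ad x (S.bracket u v) = S.bracket (S.ad x u) v + S.bracket u (S.ad x v) := by
    intro u hu v hv
    have h := S.jacobi false false false u v x (by simpa) (by simpa) (by simpa)
    simp only [Bool.and_self, Bool.false_eq_true, if_false, one_smul] at h
    rw [S.skew_e v _ (Or.inr (S.bk_ee _ hx _ hu)), S.skew_e x u (Or.inl hx),
      S.skew_e x _ (Or.inl hx)] at h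
    simp only [map_neg, LinearMap.neg_apply, neg_neg] at h
    simp only [ad, LinearMap.flip_apply]
    rw [add_comm (S.bracket (S.bracket u x) v), ← sub_eq_zero, ← neg_eq_zero, ← h]; abel
  have heo : ∀ u ∈ S.even, ∀ v ∈ S.odd,
      S.ad x (S.bracket u v) = S.bracket (S.ad x u) v + S.bracket u (S.ad x v) := by
    intro u hu v hv
    have h := S.jacobi false true false u v x (by simpa) (by simpa) (by simpa)
    simp only [Bool.and_false, Bool.and_self, Bool.and_true, Bool.false_eq_true,
      if_false, one_smul] at h
    rw [S.skew_e v _ (Or.inr (S.bk_ee _ hx _ hu)), S.skew_e x u (Or.inl hx),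
      S.skew_e x _ (Or.inl hx)] at h
    simp only [map_neg, LinearMap.neg_apply, neg_neg] at h
    simp only [ad, LinearMap.flip_apply]
    rw [add_comm (S.bracket (S.bracket u x) v), ← sub_eq_zero, ← neg_eq_zero, ← h]; abel
  have hoe : ∀ u ∈ S.odd, ∀ v ∈ S.even,
      S.ad x (S.bracket u v) = S.bracket (S.ad x u) v + S.bracket u (S.ad x v) := by
    intro u hu v hv
    have h := S.jacobi true false false u v x (by simpa) (by simpa) (by simpa)
    simp only [Bool.and_false, Bool.and_self, Bool.false_eq_true,
      if_false, one_smul] at h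
    rw [S.skew_e v (S.bracket x u) (Or.inl hv), S.skew_e x u (Or.inl hx),
      S.skew_e x _ (Or.inl hx)] at h
    simp only [map_neg, LinearMap.neg_apply, neg_neg] at h
    simp only [ad, LinearMap.flip_apply]
    rw [add_comm (S.bracket (S.bracket u x) v), ← sub_eq_zero, ← neg_eq_zero, ← h]; abel
  have hoo : ∀ u ∈ S.odd, ∀ v ∈ S.odd,
      S.ad x (S.bracket u v) = S.bracket (S.ad x u) v + S.bracket u (S.ad x v) := by
    intro u hu v hv
    have h := S.jacobi true true false u v x (by simpa) (by simpa) (by simpa)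
    simp only [Bool.and_false, Bool.and_self, Bool.false_eq_true,
      if_false, if_true, one_smul, neg_smul] at h
    rw [S.skew_oo v hv _ (S.bk_eo _ hx _ hu), S.skew_e x u (Or.inl hx),
      S.skew_e x _ (Or.inl hx)] at h
    simp only [map_neg, LinearMap.neg_apply, neg_neg] at h
    simp only [ad, LinearMap.flip_apply]
    rw [add_comm (S.bracket (S.bracket u x) v), ← sub_eq_zero, ← neg_eq_zero, ← h]; abel
  have dec : ∀ w : L, ∃ e ∈ S.even, ∃ o ∈ S.odd, e + o = w := fun w =>
    mem_sup.1 (S.grading_sup ▸ mem_top)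
  obtain ⟨ue, hue, uo, huo, rfl⟩ := dec u
  obtain ⟨ve, hve, vo, hvo, rfl⟩ := dec v
  simp only [map_add, LinearMap.add_apply, hee ue hue ve hve, heo ue hue vo hvo,
    hoe uo huo ve hve, hoo uo huo vo hvo]
  abel

/-! ### The lower central series of `N` -/

section
variable {N : Submodule ℂ L}

lemma bracket_mem_lcsIn_succ {k : ℕ} {u v : L} (hu : u ∈ S.lcsIn N k) (hv : v ∈ N) :
    S.bracket u v ∈ S.lcsIn N (k + 1) := mem_bk hu hv

/-- Each term of the lower central series of a graded ideal is stable under homogeneous elements. -/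
lemma lcsIn_stable (hg : S.IsGraded N) (hi : S.IsIdeal N) {x : L} (hx : S.Hom x) :
    ∀ k, ∀ u ∈ S.lcsIn N k, S.ad x u ∈ S.lcsIn N k := by
  intro k
  induction k with
  | zero => exact fun u hu => hi (mem_bk hu mem_top)
  | succ k ih =>
    change S.bk (S.lcsIn N k) N ≤ (S.lcsIn N (k + 1)).comap (S.ad x)
    refine bk_le_of_hom (hg.lcsIn k) hg fun u hu hu' v hv hv' => ?_
    change S.bracket (S.bracket u v) x ∈ S.lcsIn N (k + 1)
    refine swap_mem hx (hu'.bracket hv') (jacobi_mem hx hu' hv' ?_ ?_)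
    · exact bracket_mem_lcsIn_succ hu (hi (mem_bk hv mem_top))
    · refine swap_mem (hx.bracket hu') hv' (bracket_mem_lcsIn_succ ?_ hv)
      exact swap_mem hu' hx (ih u hu)

lemma lcsIn_succ_le (hg : S.IsGraded N) (hi : S.IsIdeal N) (k : ℕ) :
    S.lcsIn N (k + 1) ≤ S.lcsIn N k :=
  bk_le_of_hom (hg.lcsIn k) hg fun u hu _ _ _ hv' => lcsIn_stable hg hi hv' k u hu

lemma lcsIn_le (hg : S.IsGraded N) (hi : S.IsIdeal N) : ∀ k, S.lcsIn N k ≤ N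
  | 0 => le_rfl
  | k + 1 => (lcsIn_succ_le hg hi k).trans (lcsIn_le hg hi k)

lemma bk_lcsIn_one (hg : S.IsGraded N) (k : ℕ) :
    S.bk (S.lcsIn N k) (S.lcsIn N 1) ≤ S.lcsIn N (k + 2) := by
  refine bk_le_of_hom (hg.lcsIn k) (hg.lcsIn 1) fun a ha ha' b hb _ => ?_
  have h : S.bk N N ≤ (S.lcsIn N (k + 2)).comap (S.bracket a) := by
    refine bk_le_of_hom hg hg fun n hn hn' m hm hm' => ?_
    change S.bracket a (S.bracket n m) ∈ S.lcsIn N (k + 2)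
    refine jacobi_mem ha' hn' hm' ?_ ?_
    · refine swap_mem (hm'.bracket ha') hn' (bracket_mem_lcsIn_succ (k := k + 1) ?_ hn)
      exact swap_mem ha' hm' (bracket_mem_lcsIn_succ ha hm)
    · exact swap_mem (ha'.bracket hn') hm'
        (bracket_mem_lcsIn_succ (k := k + 1) (bracket_mem_lcsIn_succ ha hn) hm)
  exact h hb

lemma ad_pow_stable (hg : S.IsGraded N) (hi : S.IsIdeal N) {x : L} (hx : S.Hom x) (k m : ℕ)
    {u : L} (hu : u ∈ S.lcsIn N k) : (S.ad x ^ m) u ∈ S.lcsIn N k := by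
  induction m with
  | zero => simpa using hu
  | succ m ih => rw [pow_succ', Module.End.mul_apply]; exact lcsIn_stable hg hi hx k _ ih

/-- A Leibniz argument: if `ad x ^ p` kills `u` modulo `D (k+1)` and `ad x ^ q` kills `v` modulo
`D 1`, then `ad x ^ (p + q)` kills `[u, v]` modulo `D (k+2)`. -/
lemma ad_pow_bracket (hg : S.IsGraded N) (hi : S.IsIdeal N) {x : L} (hx : x ∈ S.even) (k : ℕ) :
    ∀ n p q : ℕ, p + q = n → ∀ u ∈ S.lcsIn N k, ∀ v ∈ N,
      (S.ad x ^ p) u ∈ S.lcsIn N (k + 1) → (S.ad x ^ q) v ∈ S.lcsIn N 1 →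
      (S.ad x ^ n) (S.bracket u v) ∈ S.lcsIn N (k + 2) := by
  intro n
  induction n with
  | zero =>
    intro p q hpq u hu v hv hp hq
    obtain ⟨rfl, rfl⟩ : p = 0 ∧ q = 0 := by omega
    simpa using bracket_mem_lcsIn_succ (k := k + 1) (by simpa using hp) hv
  | succ n ih =>
    intro p q hpq u hu v hv hp hq
    rcases p with _ | p
    · exact ad_pow_stable hg hi (Or.inl hx) _ _
        (bracket_mem_lcsIn_succ (k := k + 1) (by simpa using hp) hv)
    rcases q with _ | q
    · exact ad_pow_stable hg hi (Or.inl hx) _ _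
        (bk_lcsIn_one hg k (mem_bk hu (by simpa using hq)))
    rw [pow_succ, Module.End.mul_apply, ad_even hx, map_add]
    refine add_mem ?_ ?_
    · refine ih p (q + 1) (by omega) _ (lcsIn_stable hg hi (Or.inl hx) k u hu) v hv ?_ hq
      rwa [pow_succ, Module.End.mul_apply] at hp
    · refine ih (p + 1) q (by omega) u hu _ (lcsIn_stable hg hi (Or.inl hx) 0 v hv) hp ?_
      rwa [pow_succ, Module.End.mul_apply] at hq

/-- An even element nilpotent on `N / [N, N]` is nilpotent on every quotient of the lower central
series. -/
lemma ad_pow_even (hg : S.IsGraded N) (hi : S.IsIdeal N) {x : L} (hx : x ∈ S.even) {m : ℕ}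
    (hm : ∀ u ∈ N, (S.ad x ^ m) u ∈ S.lcsIn N 1) (k : ℕ) :
    ∃ m : ℕ, ∀ u ∈ S.lcsIn N k, (S.ad x ^ m) u ∈ S.lcsIn N (k + 1) := by
  induction k with
  | zero => exact ⟨m, hm⟩
  | succ k ih =>
    obtain ⟨p, hp⟩ := ih
    refine ⟨p + m, ?_⟩
    change S.bk (S.lcsIn N k) N ≤ (S.lcsIn N (k + 2)).comap (S.ad x ^ (p + m))
    exact map₂_le.2 fun u hu v hv =>
      ad_pow_bracket hg hi hx k _ p m rfl u hu v hv (hp u hu) (hm v hv)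

/-- An odd element acts with square zero on every quotient of the lower central series. -/
lemma ad_sq_odd (hg : S.IsGraded N) (hsq : S.sq ≤ N) {x : L}
    (hx : x ∈ S.odd) (k : ℕ) :
    ∀ u ∈ S.lcsIn N k, (S.ad x ^ 2) u ∈ S.lcsIn N (k + 1) := by
  change S.lcsIn N k ≤ (S.lcsIn N (k + 1)).comap (S.ad x ^ 2)
  refine (hg.lcsIn k).le_of_hom fun u hu hu' => ?_
  have hxx : S.bracket u (S.bracket x x) ∈ S.lcsIn N (k + 1) :=
    bracket_mem_lcsIn_succ hu (hsq (mem_bk mem_top mem_top))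
  rw [mem_comap, pow_two, Module.End.mul_apply]
  simp only [ad, LinearMap.flip_apply]
  rw [← smul_mem_iff _ (two_ne_zero (α := ℂ))]
  rcases hu' with hu' | hu'
  · have h := S.jacobi false true true u x x (by simpa) (by simpa) (by simpa)
    simp only [Bool.and_self, Bool.false_and, Bool.false_eq_true,
      if_false, if_true, one_smul, neg_smul] at h
    rw [S.skew_e x u (Or.inr hu'), map_neg, S.skew_oo x hx _ (S.bk_eo _ hu' _ hx)] at h
    have e : (2 : ℂ) • S.bracket (S.bracket u x) x = S.bracket u (S.bracket x x) := by
      rw [two_smul, ← sub_eq_zero, ← neg_eq_zero, ← h]; abel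
    rwa [e]
  · have h := S.jacobi true true true u x x (by simpa) (by simpa) (by simpa)
    simp only [Bool.and_self, if_true, neg_smul, one_smul] at h
    rw [S.skew_oo x hx u hu', S.skew_e x _ (Or.inr (S.bk_oo _ hu' _ hx))] at h
    have e : (2 : ℂ) • S.bracket (S.bracket u x) x = S.bracket u (S.bracket x x) := by
      rw [two_smul, ← sub_eq_zero, ← h]; abel
    rwa [e]

/-- A homogeneous element acting nilpotently on the quotients of the lower central series of the
nilradical lies in the nilradical, because it spans with it a nilpotent graded ideal. -/
lemma mem_nilradical (hN : S.IsNilradical N) (hsq : S.sq ≤ N) {x : L} (hx : S.Hom x)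
    (h : ∀ k, ∃ m : ℕ, ∀ u ∈ S.lcsIn N k, (S.ad x ^ m) u ∈ S.lcsIn N (k + 1)) : x ∈ N := by
  obtain ⟨⟨hg, hi, s₀, hs₀⟩, hmax⟩ := hN
  set A : Submodule ℂ L := N ⊔ span ℂ {x} with hA
  have hNA : N ≤ A := le_sup_left
  have hxA : x ∈ A := mem_sup_right (mem_span_singleton_self x)
  have hAA : ∀ B C : Submodule ℂ L, S.bk B C ≤ N := fun B C =>
    (map₂_le_map₂ le_top le_top).trans hsq
  refine hmax A ?_ ((hAA _ _).trans hNA) ?_ hxA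
  · refine isGraded_of_le (sup_le ?_ ?_)
    · exact hg.le_of_hom fun a ha ha' => mem_of_hom (hNA ha) ha'
    · rw [span_singleton_le_iff_mem]; exact mem_of_hom hxA hx
  have step : ∀ k, ∃ s, S.lcsIn A s ≤ S.lcsIn N k := by
    intro k
    induction k with
    | zero => exact ⟨1, hAA _ _⟩
    | succ k ih =>
      obtain ⟨s, hs⟩ := ih
      obtain ⟨m, hm⟩ := h k
      have claim : ∀ j, S.lcsIn A (s + j) ≤
          S.lcsIn N (k + 1) ⊔ (S.lcsIn N k).map (S.ad x ^ j) := by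
        intro j
        induction j with
        | zero => simpa [Module.End.one_eq_id] using hs.trans le_sup_right
        | succ j ihj =>
          refine map₂_le.2 fun w hw a ha => ?_
          obtain ⟨p, hp, q, hq, rfl⟩ := mem_sup.1 (ihj hw)
          obtain ⟨u, hu, rfl⟩ := hq
          obtain ⟨n, hn, y, hy, rfl⟩ := mem_sup.1 ha
          obtain ⟨c, rfl⟩ := mem_span_singleton.1 hy
          simp only [map_add, LinearMap.add_apply, map_smul]
          refine add_mem (add_mem ?_ ?_)
            (smul_mem _ _ (add_mem ?_ ?_))
          · exact mem_sup_left (lcsIn_succ_le hg hi _ (bracket_mem_lcsIn_succ hp hn))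
          · exact mem_sup_left (bracket_mem_lcsIn_succ (ad_pow_stable hg hi hx k j hu) hn)
          · exact mem_sup_left (lcsIn_stable hg hi hx _ p hp)
          · refine mem_sup_right ⟨u, hu, ?_⟩
            rw [pow_succ', Module.End.mul_apply]; rfl
      refine ⟨s + m, (claim m).trans (sup_le le_rfl ?_)⟩
      rintro _ ⟨u, hu, rfl⟩
      exact hm u hu
  obtain ⟨s, hs⟩ := step s₀
  exact ⟨s, le_bot_iff.1 (hs.trans hs₀.le)⟩

end

/-! ### Commuting families of operators -/

attribute [local instance] LieRing.ofAssociativeRing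

/-- A nonzero space has a common eigenvector for any linear family of commuting operators. This is
Lie's theorem for the abelian Lie algebra of these operators. -/
lemma exists_common_eigenvector {E V : Type} [AddCommGroup E] [Module ℂ E] [AddCommGroup V]
    [Module ℂ V] [FiniteDimensional ℂ V] [Nontrivial V] (ρ : E →ₗ[ℂ] Module.End ℂ V)
    (hρ : ∀ z w, Commute (ρ z) (ρ w)) :
    ∃ (χ : E →ₗ[ℂ] ℂ) (v : V), v ≠ 0 ∧ ∀ z, ρ z v = χ z • v := by
  let G : LieSubalgebra ℂ (Module.End ℂ V) :=
    { LinearMap.range ρ with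
      lie_mem' := by
        rintro _ _ ⟨z, rfl⟩ ⟨w, rfl⟩
        rw [(commute_iff_lie_eq.1 (hρ z w))]
        exact zero_mem (LinearMap.range ρ) }
  have : IsLieAbelian G := ⟨by
    rintro ⟨_, z, rfl⟩ ⟨_, w, rfl⟩
    exact Subtype.ext (commute_iff_lie_eq.1 (hρ z w))⟩
  obtain ⟨χ, hχ⟩ := LieModule.exists_nontrivial_weightSpace_of_isSolvable ℂ G V
  obtain ⟨v, hv⟩ := exists_ne (0 : LieModule.weightSpace V χ)
  refine ⟨χ.comp (ρ.codRestrict G.toSubmodule fun z => ⟨z, rfl⟩), v, by simpa using hv, ?_⟩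
  intro z
  exact (LieModule.mem_weightSpace χ (v : V)).1 v.2 ⟨ρ z, z, rfl⟩

/-- In a linear family of commuting operators on `V`, the nilpotent ones contain a subspace of
codimension at most `dim V` (the common kernel of the diagonal entries in a simultaneous
triangularization). -/
lemma exists_nilpotent_subspace {E : Type} [AddCommGroup E] [Module ℂ E] [FiniteDimensional ℂ E] :
    ∀ (n : ℕ) (V : Type) [AddCommGroup V] [Module ℂ V] [FiniteDimensional ℂ V]
      (ρ : E →ₗ[ℂ] Module.End ℂ V), finrank ℂ V = n → (∀ z w, Commute (ρ z) (ρ w)) →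
      ∃ K : Submodule ℂ E, finrank ℂ E ≤ finrank ℂ K + n ∧ ∀ z ∈ K, _root_.IsNilpotent (ρ z) := by
  intro n
  induction n with
  | zero =>
    intro V _ _ _ ρ hV _
    have := finrank_zero_iff.1 hV
    exact ⟨⊤, by simp, fun z _ => ⟨1, LinearMap.ext fun v => Subsingleton.elim _ _⟩⟩
  | succ n ih =>
    intro V _ _ _ ρ hV hρ
    have : Nontrivial V := nontrivial_of_finrank_pos (R := ℂ) (by omega)
    obtain ⟨χ, v, hv, hχ⟩ := exists_common_eigenvector ρ hρ
    have hst : ∀ z, span ℂ {v} ≤ (span ℂ {v}).comap (ρ z) := fun z => by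
      rw [span_singleton_le_iff_mem, mem_comap, hχ]
      exact smul_mem _ _ (mem_span_singleton_self v)
    let ρ' : E →ₗ[ℂ] Module.End ℂ (V ⧸ span ℂ {v}) :=
      { toFun := fun z => (span ℂ {v}).mapQ _ (ρ z) (hst z)
        map_add' := fun a b => by ext; simp
        map_smul' := fun a b => by ext; simp }
    have hρ'mk : ∀ z u, ρ' z (Submodule.Quotient.mk u) = Submodule.Quotient.mk (ρ z u) :=
      fun z u => rfl
    have hpow : ∀ z (m : ℕ) u,
        (ρ' z ^ m) (Submodule.Quotient.mk u) = Submodule.Quotient.mk ((ρ z ^ m) u) := by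
      intro z m
      induction m with
      | zero => simp
      | succ m ihm => intro u; rw [pow_succ, pow_succ, Module.End.mul_apply, hρ'mk, ihm]; rfl
    have hdim : finrank ℂ (V ⧸ span ℂ {v}) = n := by
      have h₁ := (span ℂ {v}).finrank_quotient_add_finrank
      rw [finrank_span_singleton hv] at h₁
      omega
    obtain ⟨K, hK, hnil⟩ := ih _ ρ' hdim fun z w => by
      refine LinearMap.ext fun u => ?_
      obtain ⟨u, rfl⟩ := Submodule.Quotient.mk_surjective _ u
      rw [Module.End.mul_apply, Module.End.mul_apply, hρ'mk, hρ'mk, hρ'mk, hρ'mk]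
      exact congrArg _ (LinearMap.congr_fun (hρ z w) u)
    refine ⟨K ⊓ LinearMap.ker χ, ?_, ?_⟩
    · have h₁ := finrank_sup_add_finrank_inf_eq K (LinearMap.ker χ)
      have h₂ := LinearMap.finrank_range_add_finrank_ker χ
      have h₃ : finrank ℂ (LinearMap.range χ) ≤ 1 := by
        simpa using (LinearMap.range χ).finrank_le
      have h₄ := (K ⊔ LinearMap.ker χ).finrank_le
      omega
    · rintro z ⟨hzK, hzχ⟩
      obtain ⟨m, hm⟩ := hnil z hzK
      refine ⟨m + 1, LinearMap.ext fun u => ?_⟩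
      have h₁ : (ρ z ^ m) u ∈ span ℂ {v} := by
        rw [← Submodule.Quotient.mk_eq_zero, ← hpow, hm]; rfl
      obtain ⟨c, hc⟩ := mem_span_singleton.1 h₁
      rw [pow_succ', Module.End.mul_apply, ← hc, map_smul, hχ, LinearMap.mem_ker.1 hzχ]
      simp

end SuperAlg

open SuperAlg in
/-- For a finite-dimensional complex solvable Lie superalgebra `R` with
nilradical `N` such that `R² ⊆ N`, one has `dim (R/N) ≤ dim (N/N²)`. -/
theorem codim_nilradical_le
    {L : Type} [AddCommGroup L] [Module ℂ L] [FiniteDimensional ℂ L] (S : SuperAlg L)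
    (hsolv : S.IsSolvable)
    (N : Submodule ℂ L) (hN : S.IsNilradical N)
    (hsq : S.sq ≤ N) :
    Module.finrank ℂ (L ⧸ N) ≤
      Module.finrank ℂ (↥N ⧸ Submodule.comap N.subtype (S.bk N N)) := by
  have hg : S.IsGraded N := hN.1.1
  have hi : S.IsIdeal N := hN.1.2.1
  have hodd : S.odd ≤ N := fun x hx =>
    mem_nilradical hN hsq (Or.inr hx) fun k => ⟨2, ad_sq_odd hg hsq hx k⟩
  let M := Submodule.comap N.subtype (S.bk N N)
  have hzN : ∀ z : S.even, ∀ u ∈ N, S.ad z u ∈ N := fun z => lcsIn_stable hg hi (Or.inl z.2) 0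
  have hzM : ∀ z : S.even, M ≤ M.comap ((S.ad z).restrict (hzN z)) := fun z u hu =>
    lcsIn_stable hg hi (Or.inl z.2) 1 (u : L) hu
  -- the action of the even part on `N / [N, N]`
  let ρ : S.even →ₗ[ℂ] Module.End ℂ (N ⧸ M) :=
    { toFun := fun z => M.mapQ M ((S.ad z).restrict (hzN z)) (hzM z)
      map_add' := fun a b => by
        refine LinearMap.ext fun u => ?_
        obtain ⟨u, rfl⟩ := Submodule.Quotient.mk_surjective _ u
        refine congrArg (Submodule.Quotient.mk (p := M)) (Subtype.ext ?_)
        exact map_add (S.bracket (u : L)) (a : L) b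
      map_smul' := fun c a => by
        refine LinearMap.ext fun u => ?_
        obtain ⟨u, rfl⟩ := Submodule.Quotient.mk_surjective _ u
        refine congrArg (Submodule.Quotient.mk (p := M)) (Subtype.ext ?_)
        exact map_smul (S.bracket (u : L)) c (a : L) }
  have hρmk : ∀ z (u : N), ρ z (Submodule.Quotient.mk u) =
      Submodule.Quotient.mk ((S.ad z).restrict (hzN z) u) := fun z u => rfl
  have hpow : ∀ (z : S.even) (m : ℕ) (u : N), ∃ h : (S.ad (z : L) ^ m) (u : L) ∈ N,
      (ρ z ^ m) (Submodule.Quotient.mk u) = Submodule.Quotient.mk ⟨_, h⟩ := by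
    intro z m
    induction m with
    | zero => exact fun u => ⟨u.2, rfl⟩
    | succ m ih =>
      intro u
      obtain ⟨h, e⟩ := ih ((S.ad z).restrict (hzN z) u)
      refine ⟨by rw [pow_succ]; exact h, ?_⟩
      rw [pow_succ, Module.End.mul_apply, hρmk, e]
      rfl
  have hcomm : ∀ z w, Commute (ρ z) (ρ w) := by
    intro z w
    refine LinearMap.ext fun u => ?_
    obtain ⟨u, rfl⟩ := Submodule.Quotient.mk_surjective _ u
    rw [Module.End.mul_apply, Module.End.mul_apply, hρmk, hρmk, hρmk, hρmk,
      Submodule.Quotient.eq]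
    change S.ad z (S.bracket (u : L) w) - S.bracket (S.bracket u z) w ∈ S.bk N N
    rw [ad_even z.2, add_comm]
    have : S.bracket (u : L) (S.ad z w) ∈ S.bk N N :=
      mem_bk u.2 (hsq (mem_bk mem_top mem_top))
    simpa [ad] using this
  obtain ⟨K, hK, hnil⟩ := exists_nilpotent_subspace _ (N ⧸ M) ρ rfl hcomm
  have hKN : K.map S.even.subtype ≤ N := by
    rintro _ ⟨z, hz, rfl⟩
    obtain ⟨m, hm⟩ := hnil z hz
    refine mem_nilradical hN hsq (Or.inl z.2) (ad_pow_even hg hi z.2 (m := m) fun u hu => ?_)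
    obtain ⟨h, e⟩ := hpow z m ⟨u, hu⟩
    rw [hm, LinearMap.zero_apply] at e
    exact (Submodule.Quotient.mk_eq_zero M).1 e.symm
  have d₁ := N.finrank_quotient_add_finrank
  have d₂ := finrank_sup_add_finrank_inf_eq S.even S.odd
  have d₃ := finrank_sup_add_finrank_inf_eq (K.map S.even.subtype) S.odd
  have d₄ : K.map S.even.subtype ⊓ S.odd = ⊥ :=
    le_bot_iff.1 ((inf_le_inf_right _ (S.even.map_subtype_le K)).trans S.grading_inf.le)
  have d₅ := Submodule.finrank_mono (sup_le hKN hodd)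
  have d₆ : finrank ℂ (K.map S.even.subtype) = finrank ℂ K :=
    finrank_map_subtype_eq _ _
  rw [S.grading_sup, S.grading_inf, finrank_top, finrank_bot] at d₂
  rw [d₄, finrank_bot, d₆] at d₃
  change _ ≤ finrank ℂ (N ⧸ M)
  omega
end

section
/- The dimensions of any two maximal tori of a finite-dimensional complex nilpotent Lie superalgebra are equal. -/
/-!
The dimension of a maximal torus is read off from the eigenvalues of even superderivations.

Let `g` be the Lie algebra of even superderivations and `T` a maximal torus. In a joint eigenbasis
`b` of `T`, let `W ⊆ ℂⁿ` be the space of the weight vectors `wt d`, where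
`d (b k) = wt d k • b k`, for `d ∈ T`; it has dimension `dim T`. The key claim
(`eigIn_of_evenDer`) is that for *every* `y ∈ g` the eigenvalues of `y` occur among the coordinates
of a single `w ∈ W`.

* If `c ∈ g` commutes with `T`, its semisimple part is an even superderivation
  (`exists_semisimplePart`) which commutes with `T`, hence lies in `T` by maximality, and it has the
  same eigenvalues as `c` (`eigIn_of_commute`).
* Choose `t ∈ T` whose centralizer is that of `T` (`exists_generic`). As `ad t` is diagonalizable,
  `g = [g, t] + c₀` with `c₀` the centralizer of `t` in `g` (`exists_commutator_add`). So
  `(x, c) ↦ exp x * c * exp (-x)` is a submersion `g × c₀ → g` at `(0, t)`, and every element of `g`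
  near `t` is conjugate to an element of `c₀` (`eventually_conj`). The claim thus holds for
  `t + z • u` for all `z` near `0`.
* The roots of the characteristic polynomial of `t + z • u` are specializations of elements integral
  over `ℂ[z]`. Some assignment of the roots to coordinates works for infinitely many `z`, so
  the linear relations defining `W` hold identically in `z`, in particular at `z = 1`
  (`EigIn.of_line`).

Given another torus `T₁`, every one of its weight vectors thus lies in one of the finitely many
images of `W` under the maps `w ↦ w ∘ f`. A vector space over `ℂ` is not a finite union of proper
subspaces, so one image contains all the weight vectors of `T₁`, whence `dim T₁ ≤ dim W = dim T`
(`finrank_le`).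
-/

open Submodule Module

namespace MaxTori

/-! ### Specialization of roots -/

open Polynomial in
/-- Evaluation of polynomials at a point extends to any integral extension of `ℂ[X]`: a prime over
`(X - z)` has residue field `ℂ`, since `ℂ` is algebraically closed. -/
lemma exists_hom_extending_eval {A : Type*} [CommRing A] [Algebra ℂ[X] A]
    [Algebra.IsIntegral ℂ[X] A] [FaithfulSMul ℂ[X] A] (z : ℂ) :
    ∃ φ : A →+* ℂ, φ.comp (algebraMap ℂ[X] A) = evalRingHom z := by
  have hmax : (RingHom.ker (evalRingHom z)).IsMaximal :=
    RingHom.ker_isMaximal_of_surjective _ fun c ↦ ⟨C c, by simp⟩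
  obtain ⟨Q, hQ, hQz⟩ := Ideal.exists_ideal_over_maximal_of_isIntegral (S := A)
    (RingHom.ker (evalRingHom z))
    (by simp [(RingHom.injective_iff_ker_eq_bot _).mp (FaithfulSMul.algebraMap_injective ℂ[X] A)])
  let _ := Ideal.Quotient.field Q
  let ψ : ℂ[X] →+* A ⧸ Q := (Ideal.Quotient.mk Q).comp (algebraMap ℂ[X] A)
  let g : ℂ →+* A ⧸ Q := ψ.comp C
  have hψ : g.comp (evalRingHom z) = ψ := by
    refine RingHom.ext fun p ↦ ?_
    have h1 : p - C (p.eval z) ∈ Q.comap (algebraMap ℂ[X] A) := by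
      rw [hQz]; simp
    have h2 := Ideal.Quotient.eq_zero_iff_mem.mpr (Ideal.mem_comap.mp h1)
    rw [map_sub, map_sub, sub_eq_zero] at h2
    exact h2.symm
  have hψi : ψ.IsIntegral :=
    RingHom.IsIntegral.trans _ _ (algebraMap_isIntegral_iff.mpr inferInstance)
      (RingHom.isIntegral_of_surjective _ Ideal.Quotient.mk_surjective)
  have hg : g.IsIntegral := by
    rw [← hψ] at hψi
    exact RingHom.IsIntegral.tower_top _ _ hψi
  let e := RingEquiv.ofBijective g (IsAlgClosed.ringHom_bijective_of_isIntegral g hg)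
  refine ⟨(e.symm : A ⧸ Q →+* ℂ).comp (Ideal.Quotient.mk Q), ?_⟩
  rw [RingHom.comp_assoc]
  change (e.symm : A ⧸ Q →+* ℂ).comp ψ = _
  rw [← hψ]
  refine RingHom.ext fun p ↦ ?_
  exact e.symm_apply_apply _

open Polynomial in
/-- The condition that the roots of a polynomial with coefficients depending polynomially on `z` occur
among the coordinates of one vector of `W` holds for all `z` once it holds for infinitely many. -/
lemma roots_specialize {m : ℕ} (P : ℂ[X][X]) (hP : P.Monic)
    (W : Submodule ℂ (Fin m → ℂ)) (Z : Set ℂ) (hZ : Z.Infinite)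
    (h : ∀ z ∈ Z, ∃ w ∈ W, ∀ μ, (P.map (evalRingHom z)).IsRoot μ → ∃ j, μ = w j) (z : ℂ) :
    ∃ w ∈ W, ∀ μ, (P.map (evalRingHom z)).IsRoot μ → ∃ j, μ = w j := by
  classical
  let K := AlgebraicClosure (FractionRing ℂ[X])
  let A := integralClosure ℂ[X] K
  have hK : Function.Injective (algebraMap ℂ[X] K) := by
    rw [IsScalarTower.algebraMap_eq ℂ[X] (FractionRing ℂ[X]) K]
    exact (algebraMap (FractionRing ℂ[X]) K).injective.comp (IsFractionRing.injective _ _)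
  have hA : FaithfulSMul ℂ[X] A := by
    rw [faithfulSMul_iff_algebraMap_injective]
    rw [IsScalarTower.algebraMap_eq ℂ[X] A K] at hK
    exact Function.Injective.of_comp (f := algebraMap A K) hK
  choose φ hφ using fun z : ℂ ↦ exists_hom_extending_eval (A := A) z
  -- The roots of the monic polynomial `P` in `K` are integral, so `P` splits over `A`.
  obtain ⟨ι, _, α, hα⟩ : ∃ (ι : Type) (_ : Fintype ι) (α : ι → A),
      P.map (algebraMap ℂ[X] A) = ∏ i, (X - C (α i)) := by
    have hs := IsAlgClosed.splits (P.map (algebraMap ℂ[X] K))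
    have hr : ∀ r ∈ (P.map (algebraMap ℂ[X] K)).roots, r ∈ A := by
      intro r hr
      refine ⟨P, hP, ?_⟩
      have := isRoot_of_mem_roots hr
      rwa [IsRoot, eval_map] at this
    let l := (P.map (algebraMap ℂ[X] K)).roots.toList
    refine ⟨Fin l.length, inferInstance, fun i ↦ ⟨l.get i, hr _ ?_⟩, ?_⟩
    · exact Multiset.mem_toList.mp (List.get_mem l i)
    · apply Polynomial.map_injective (algebraMap A K) (Subtype.val_injective)
      rw [Polynomial.map_map, ← IsScalarTower.algebraMap_eq, Polynomial.map_prod]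
      have h1 : P.map (algebraMap ℂ[X] K) = (l.map fun r ↦ X - C r).prod := by
        conv_lhs => rw [hs.eq_prod_roots_of_monic (hP.map _)]
        rw [← Multiset.prod_coe, ← Multiset.map_coe, Multiset.coe_toList]
      refine h1.trans ?_
      rw [← List.prod_ofFn]
      congr 1
      apply List.ext_get <;> simp [l]
  have hroot : ∀ z μ, (P.map (evalRingHom z)).IsRoot μ ↔ ∃ i, μ = φ z (α i) := by
    intro z μ
    rw [← hφ z, ← Polynomial.map_map, hα, Polynomial.map_prod, IsRoot, eval_prod,
      Finset.prod_eq_zero_iff]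
    simp [sub_eq_zero]
  -- One assignment of the roots to the coordinates of `w` serves infinitely many `z`.
  have h' : ∀ z : Z, ∃ f : ι → Fin m, ∃ w ∈ W, ∀ i, φ z (α i) = w (f i) := by
    rintro ⟨z, hz⟩
    obtain ⟨w, hw, hwr⟩ := h z hz
    choose f hf using fun i ↦ hwr _ ((hroot z _).mpr ⟨i, rfl⟩)
    exact ⟨f, w, hw, hf⟩
  choose F w hw hF using h'
  have := hZ.to_subtype
  obtain ⟨f, hf⟩ := Finite.exists_infinite_fiber F
  let W' : Submodule ℂ (ι → ℂ) := W.map (LinearMap.funLeft ℂ ℂ f)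
  have key : (fun i ↦ φ z (α i)) ∈ W' := by
    by_contra hn
    -- The functional `ℓ` applied to the roots is an algebraic function of `z` vanishing at
    -- infinitely many points, hence identically.
    obtain ⟨ℓ, hℓ, hℓW⟩ := Submodule.exists_le_ker_of_notMem hn
    have hℓ' : ∀ v, ℓ v = ∑ i, v i * ℓ (Pi.single i 1) := by
      intro v
      conv_lhs => rw [← Finset.univ_sum_single v, map_sum]
      refine Finset.sum_congr rfl fun i _ ↦ ?_
      rw [← smul_eq_mul, ← map_smul, ← Pi.single_smul]; simp
    let a : A := ∑ i, α i * algebraMap ℂ[X] A (C (ℓ (Pi.single i 1)))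
    have ha : ∀ z, φ z a = ℓ (fun i ↦ φ z (α i)) := by
      intro z
      rw [hℓ', map_sum]
      refine Finset.sum_congr rfl fun i _ ↦ ?_
      rw [map_mul]
      congr 1
      have := congrArg (fun g ↦ g (C (ℓ (Pi.single i 1)))) (hφ z)
      simpa using this
    have ha0 : a ≠ 0 := by
      intro h0
      exact hℓ (by rw [← ha, h0, map_zero])
    obtain ⟨r, hr, b, hb⟩ := ((Algebra.IsIntegral.isIntegral (R := ℂ[X]) a).isAlgebraic).exists_nonzero_dvd
      (mem_nonZeroDivisors_of_ne_zero ha0)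
    apply hr
    refine Polynomial.eq_zero_of_infinite_isRoot r ?_
    have hinf : (Set.range fun y : F ⁻¹' {f} ↦ ((y : Z) : ℂ)).Infinite :=
      Set.infinite_range_of_injective (Subtype.val_injective.comp Subtype.val_injective)
    refine hinf.mono ?_
    rintro _ ⟨⟨y, hy⟩, rfl⟩
    have h1 : φ y (algebraMap ℂ[X] A r) = eval (y : ℂ) r :=
      congrArg (fun g ↦ g r) (hφ y)
    change eval (y : ℂ) r = 0
    rw [← h1, hb, map_mul, ha]
    have : (fun i ↦ φ y (α i)) ∈ W' := by
      refine ⟨w y, hw y, ?_⟩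
      ext i
      rw [hF y i, show F y = f from hy]; rfl
    rw [show ℓ (fun i ↦ φ y (α i)) = 0 from hℓW this, zero_mul]
  obtain ⟨v, hv, hvα⟩ := key
  refine ⟨v, hv, fun μ hμ ↦ ?_⟩
  obtain ⟨i, rfl⟩ := (hroot z μ).mp hμ
  exact ⟨f i, (congrFun hvα i).symm⟩

/-- All eigenvalues of `x` occur among the coordinates of a single vector of `W`. Multiplicities are
ignored, and the vector may have further coordinates which are not eigenvalues. -/
def EigIn {L : Type*} [AddCommGroup L] [Module ℂ L] {m : ℕ} (W : Submodule ℂ (Fin m → ℂ))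
    (x : End ℂ L) : Prop :=
  ∃ w ∈ W, ∀ μ, x.HasEigenvalue μ → ∃ j, μ = w j

open Polynomial in
/-- `EigIn W` holds on a whole line of endomorphisms once it holds at infinitely many points. -/
lemma EigIn.of_line {L : Type*} [AddCommGroup L] [Module ℂ L] [FiniteDimensional ℂ L] {m : ℕ}
    {W : Submodule ℂ (Fin m → ℂ)} (x u : End ℂ L) (Z : Set ℂ) (hZ : Z.Infinite)
    (h : ∀ z ∈ Z, EigIn W (x + z • u)) (z : ℂ) : EigIn W (x + z • u) := by
  classical
  let b := Module.finBasis ℂ L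
  let M : Matrix _ _ ℂ[X] := (LinearMap.toMatrix b b x).map C +
    (X : ℂ[X]) • (LinearMap.toMatrix b b u).map C
  have hM : ∀ z μ, (M.charpoly.map (evalRingHom z)).IsRoot μ ↔
      (x + z • u).HasEigenvalue μ := by
    intro z μ
    rw [Module.End.hasEigenvalue_iff_isRoot_charpoly, ← Matrix.charpoly_map,
      ← LinearMap.charpoly_toMatrix _ b]
    have : M.map (evalRingHom z) = LinearMap.toMatrix b b (x + z • u) := by
      ext i j
      simp [M]
      ring
    rw [← this]
  have := roots_specialize M.charpoly (Matrix.charpoly_monic M) W Z hZ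
  simp only [hM] at this
  exact this h z

/-! ### Elements near `t` are conjugate into its centralizer -/

section Analysis
open NormedSpace Filter Topology

variable {A : Type*} [NormedRing A] [NormedAlgebra ℂ A] [CompleteSpace A]

lemma exp_apply_of_pow {B : A →L[ℂ] A} {y v : A} (a : ℕ → A)
    (ha : ∀ n, (B ^ n) y = a n) (hv : HasSum (fun n ↦ ((n.factorial : ℂ)⁻¹) • a n) v) :
    exp B y = v := by
  have h := (exp_series_hasSum_exp' (𝕂 := ℂ) B).mapL (ContinuousLinearMap.apply ℂ A y)
  have e : (fun n : ℕ ↦ ContinuousLinearMap.apply ℂ A y (((n.factorial : ℂ)⁻¹) • B ^ n)) =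
      fun n ↦ ((n.factorial : ℂ)⁻¹) • a n := funext fun n ↦ by rw [← ha]; rfl
  rw [e] at h
  exact h.unique hv

/-- A subspace stable under `ad x` is stable under conjugation by `exp x`, since the latter is
`exp (ad x)`. -/
lemma exp_conj_mem (g : Submodule ℂ A) (hgc : IsClosed (g : Set A)) (x : A)
    (hg : ∀ y ∈ g, x * y - y * x ∈ g) (y : A) (hy : y ∈ g) :
    exp x * y * exp (-x) ∈ g := by
  let _ : NormedAlgebra ℚ A := NormedAlgebra.restrictScalars ℚ ℂ A
  let _ : NormedAlgebra ℚ (A →L[ℂ] A) := NormedAlgebra.restrictScalars ℚ ℂ _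
  -- `ad x = l + r` with commuting summands.
  let l : A →L[ℂ] A := ContinuousLinearMap.mul ℂ A x
  let r : A →L[ℂ] A := (ContinuousLinearMap.mul ℂ A).flip (-x)
  have hl : ∀ n y, (l ^ n) y = x ^ n * y := by
    intro n
    induction n with
    | zero => simp
    | succ n ih => intro y; rw [pow_succ, pow_succ, mul_apply_eq_comp, ih]; simp [l, mul_assoc]
  have hr : ∀ n y, (r ^ n) y = y * (-x) ^ n := by
    intro n
    induction n with
    | zero => simp
    | succ n ih =>
      intro y; rw [pow_succ, pow_succ', mul_apply_eq_comp, ih]; simp [r, mul_assoc]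
  have hel : ∀ y, exp l y = exp x * y := fun y ↦ by
    refine exp_apply_of_pow _ (fun n ↦ hl n y) ?_
    simpa using (exp_series_hasSum_exp' (𝕂 := ℂ) x).mul_right y
  have her : ∀ y, exp r y = y * exp (-x) := fun y ↦ by
    refine exp_apply_of_pow _ (fun n ↦ hr n y) ?_
    simpa only [mul_smul_comm] using (exp_series_hasSum_exp' (𝕂 := ℂ) (-x)).mul_left y
  have hcomm : Commute l r := by
    ext y
    simp [l, r, mul_assoc]
  have hexp : exp x * y * exp (-x) = exp (l + r) y := by
    rw [exp_add_of_commute hcomm, mul_apply_eq_comp, her, hel, mul_assoc]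
  have hpow : ∀ n, ((l + r) ^ n) y ∈ g := by
    intro n
    induction n with
    | zero => simpa
    | succ n ih =>
      rw [pow_succ', mul_apply_eq_comp]
      simpa [l, r, sub_eq_add_neg] using hg _ ih
  rw [hexp]
  have h := (exp_series_hasSum_exp' (𝕂 := ℂ) (l + r)).mapL (ContinuousLinearMap.apply ℂ A y)
  refine hgc.mem_of_tendsto h (Eventually.of_forall fun s ↦ ?_)
  refine g.sum_mem fun n _ ↦ ?_
  simpa using g.smul_mem _ (hpow n)

/-- If `g = [g, t] + c₀`, then elements of `g` close to `t` are conjugate to elements of `c₀`. The map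
`(x, c) ↦ exp x * c * exp (-x)` from `g × c₀` to `g` has derivative `(x, c) ↦ [x, t] + c` at `(0, t)`,
so it is open there. -/
lemma eventually_conj [FiniteDimensional ℂ A] (g : Submodule ℂ A)
    (hg : ∀ x ∈ g, ∀ y ∈ g, x * y - y * x ∈ g) (c₀ : Submodule ℂ A) (hc₀ : c₀ ≤ g)
    {t : A} (ht : t ∈ c₀)
    (hsurj : ∀ y ∈ g, ∃ x ∈ g, ∃ c ∈ c₀, x * t - t * x + c = y) {u : A} (hu : u ∈ g) :
    ∀ᶠ z : ℂ in 𝓝 0, ∃ c ∈ c₀, ∃ e : Aˣ, t + z • u = e * c * (e⁻¹ : Aˣ) := by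
  let _ : NormedAlgebra ℚ A := NormedAlgebra.restrictScalars ℚ ℂ A
  -- Composing with a projection `p` onto `g` makes the target the complete space `g`; on the
  -- values of the map, which lie in `g` by `exp_conj_mem`, it changes nothing.
  obtain ⟨p, hp⟩ := Submodule.ClosedComplemented.of_finiteDimensional g
  let i : g × c₀ →L[ℂ] A := g.subtypeL ∘L ContinuousLinearMap.fst ℂ g c₀
  let j : g × c₀ →L[ℂ] A := c₀.subtypeL ∘L ContinuousLinearMap.snd ℂ g c₀
  let a₀ : g × c₀ := (0, ⟨t, ht⟩)
  have hi : HasStrictFDerivAt (fun q ↦ exp (i q)) ((1 : A →L[ℂ] A) ∘L i) a₀ := by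
    refine HasStrictFDerivAt.comp a₀ ?_ i.hasStrictFDerivAt
    rw [show i a₀ = 0 by simp [i, a₀]]
    exact hasStrictFDerivAt_exp_zero
  have hn : HasStrictFDerivAt (fun q ↦ exp (-i q)) ((1 : A →L[ℂ] A) ∘L (-i)) a₀ := by
    refine HasStrictFDerivAt.comp (g := exp) a₀ ?_ (-i).hasStrictFDerivAt
    rw [show -i a₀ = 0 by simp [i, a₀]]
    exact hasStrictFDerivAt_exp_zero
  have hF := (p.hasStrictFDerivAt).comp a₀ ((hi.mul' j.hasStrictFDerivAt).mul' hn)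
  have hmap := hF.map_nhds_eq_of_surj (by
    rw [LinearMap.range_eq_top]
    rintro ⟨y, hy⟩
    obtain ⟨x, hx, c, hc, rfl⟩ := hsurj y hy
    refine ⟨(⟨x, hx⟩, ⟨c, hc⟩), ?_⟩
    rw [← hp ⟨_, hy⟩]
    simp [i, j, a₀]
    abel_nf)
  let F : g × c₀ → g := fun q ↦ p (exp (i q) * j q * exp (-i q))
  have hF0 : F a₀ = ⟨t, hc₀ ht⟩ := by
    rw [← hp ⟨t, hc₀ ht⟩]
    simp [F, i, j, a₀]
  have hcont : Continuous fun z : ℂ ↦ (⟨t + z • u, g.add_mem (hc₀ ht) (g.smul_mem z hu)⟩ : g) := by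
    fun_prop
  have hrange : Set.range F ∈ 𝓝 (⟨t, hc₀ ht⟩ : g) := by
    rw [← hF0]
    have : map F (𝓝 a₀) = 𝓝 (F a₀) := hmap
    rw [← this]
    exact range_mem_map
  have hev := hcont.tendsto 0
  simp only [zero_smul, add_zero] at hev
  filter_upwards [hev hrange] with z ⟨⟨x, c⟩, hxc⟩
  have hunit : ∀ x : A, exp x * exp (-x) = 1 := fun x ↦ by
    rw [← exp_add_of_commute (Commute.neg_right rfl)]; simp
  refine ⟨c, c.2, ⟨exp (x : A), exp (-(x : A)), hunit _, by simpa using hunit (-(x : A))⟩, ?_⟩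
  have hmem := exp_conj_mem g g.closed_of_finiteDimensional (x : A) (fun y hy ↦ hg _ x.2 y hy) c
    (hc₀ c.2)
  have h1 := congrArg Subtype.val hxc
  have h2 : F (x, c) = ⟨_, hmem⟩ := by rw [← hp ⟨_, hmem⟩]; rfl
  rw [h2] at h1
  exact h1.symm
end Analysis

/-! ### Eigenbases and even superderivations -/

section Linear
variable {L : Type} [AddCommGroup L] [Module ℂ L]

lemma eigenbasis_repr {κ : Type*} (b : Basis κ ℂ L) {f : End ℂ L} {m : κ → ℂ}
    (hf : ∀ k, f (b k) = m k • b k) (v : L) (k : κ) : b.repr (f v) k = m k * b.repr v k := by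
  have : (Finsupp.lapply k ∘ₗ b.repr.toLinearMap) ∘ₗ f =
      m k • (Finsupp.lapply k ∘ₗ b.repr.toLinearMap) := by
    refine b.ext fun j ↦ ?_
    by_cases h : j = k
    · subst h; simp [hf]
    · simp [hf, h]
  simpa using congrArg (fun g ↦ g v) this

lemma isDiagonalizable_of_basis {κ : Type*} (b : Basis κ ℂ L) {f : End ℂ L} {m : κ → ℂ}
    (hf : ∀ k, f (b k) = m k • b k) : SuperAlg.IsDiagonalizable f := by
  rw [SuperAlg.IsDiagonalizable, eq_top_iff, ← b.span_eq, span_le]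
  rintro _ ⟨k, rfl⟩
  exact mem_iSup_of_mem (m k) (End.mem_eigenspace_iff.mpr (hf k))

variable [FiniteDimensional ℂ L]

lemma exists_basis_of_iSup {X : Type*} (p : X → Submodule ℂ L) (hp : ⨆ x, p x = ⊤) :
    ∃ b : Basis (Fin (finrank ℂ L)) ℂ L, ∀ k, ∃ x, b k ∈ p x := by
  have hs : ⊤ ≤ span ℂ (⋃ x, (p x : Set L)) := by
    rw [← Submodule.iSup_eq_span, hp]
  let b := Basis.ofSpan hs
  let _ := FiniteDimensional.fintypeBasisIndex b
  let e := Fintype.equivFinOfCardEq (Module.finrank_eq_card_basis b).symm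
  refine ⟨b.reindex e, fun k ↦ ?_⟩
  have : b (e.symm k) ∈ ⋃ x, (p x : Set L) := Basis.ofSpan_subset hs ⟨_, rfl⟩
  simpa using this

/-- A diagonalizable endomorphism has no generalized eigenvectors other than eigenvectors. -/
lemma maxGenEigenspace_le {f : End ℂ L} (hf : SuperAlg.IsDiagonalizable f) (μ : ℂ) :
    f.maxGenEigenspace μ ≤ f.eigenspace μ := by
  obtain ⟨b, hb⟩ := exists_basis_of_iSup _ hf
  choose m hm using hb
  have hg : ∀ k, (f - μ • (1 : End ℂ L)) (b k) = (m k - μ) • b k := fun k ↦ by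
    have := End.mem_eigenspace_iff.mp (hm k)
    simp [this, sub_smul]
  intro v hv
  obtain ⟨n, hn⟩ := (End.mem_maxGenEigenspace _ _ _).mp hv
  have hpow : ∀ n k, b.repr (((f - μ • (1 : End ℂ L)) ^ n) v) k = (m k - μ) ^ n * b.repr v k := by
    intro n k
    induction n with
    | zero => simp
    | succ n ih =>
      rw [pow_succ', Module.End.mul_apply, eigenbasis_repr b hg, ih]; ring
  have h0 : (f - μ • (1 : End ℂ L)) v = 0 := by
    refine b.ext_elem fun k ↦ ?_
    have h1 := hpow n k
    rw [hn] at h1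
    rw [eigenbasis_repr b hg]
    simp only [map_zero, Finsupp.coe_zero, Pi.zero_apply] at h1 ⊢
    rcases mul_eq_zero.mp h1.symm with h | h
    · rw [eq_zero_of_pow_eq_zero h, zero_mul]
    · rw [h, mul_zero]
  rw [End.mem_eigenspace_iff]
  simpa [sub_eq_zero] using h0

lemma exists_joint_eigenbasis {ι : Type*} (f : ι → End ℂ L) (hc : ∀ i j, Commute (f i) (f j))
    (hd : ∀ i, SuperAlg.IsDiagonalizable (f i)) :
    ∃ (b : Basis (Fin (finrank ℂ L)) ℂ L) (m : Fin (finrank ℂ L) → ι → ℂ),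
      ∀ k i, f i (b k) = m k i • b k := by
  have h := End.iSup_iInf_maxGenEigenspace_eq_top_of_forall_mapsTo f
    (fun i j μ ↦ End.mapsTo_maxGenEigenspace_of_comm (hc j i) μ)
    (fun i ↦ End.iSup_maxGenEigenspace_eq_top (f i))
  obtain ⟨b, hb⟩ := exists_basis_of_iSup _ h
  choose m hm using hb
  refine ⟨b, m, fun k i ↦ ?_⟩
  exact End.mem_eigenspace_iff.mp (maxGenEigenspace_le (hd i) _ ((mem_iInf _).mp (hm k) i))

end Linear

section Der
variable {L : Type} [AddCommGroup L] [Module ℂ L] (S : SuperAlg L)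

/-- The space of even superderivations. -/
def evenDer : Submodule ℂ (End ℂ L) where
  carrier := {d | S.IsEvenDer d}
  zero_mem' := by simp [SuperAlg.IsEvenDer]
  add_mem' := by
    rintro a b ⟨h1, h2, h3⟩ ⟨k1, k2, k3⟩
    refine ⟨fun x hx ↦ add_mem (h1 x hx) (k1 x hx), fun x hx ↦ add_mem (h2 x hx) (k2 x hx),
      fun x y ↦ ?_⟩
    simp only [LinearMap.add_apply, map_add, h3, k3]
    abel
  smul_mem' := by
    rintro c a ⟨h1, h2, h3⟩
    refine ⟨fun x hx ↦ S.even.smul_mem c (h1 x hx), fun x hx ↦ S.odd.smul_mem c (h2 x hx),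
      fun x y ↦ ?_⟩
    simp only [LinearMap.smul_apply, map_smul, h3, smul_add]

variable {S}
lemma mem_evenDer {d : End ℂ L} : d ∈ evenDer S ↔ S.IsEvenDer d := Iff.rfl

lemma evenDer_commutator {x y : End ℂ L} (hx : x ∈ evenDer S) (hy : y ∈ evenDer S) :
    x * y - y * x ∈ evenDer S := by
  obtain ⟨h1, h2, h3⟩ := hx
  obtain ⟨k1, k2, k3⟩ := hy
  refine ⟨fun v hv ↦ sub_mem (h1 _ (k1 v hv)) (k1 _ (h1 v hv)),
    fun v hv ↦ sub_mem (h2 _ (k2 v hv)) (k2 _ (h2 v hv)), fun v w ↦ ?_⟩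
  simp only [LinearMap.sub_apply, End.mul_apply, map_add, map_sub, h3, k3]
  abel

/-- The generalized eigenspaces of a derivation grade the algebra. -/
lemma bracket_mem_maxGenEigenspace {d : End ℂ L} (hd : S.IsEvenDer d) {α β : ℂ} {x y : L}
    (hx : x ∈ d.maxGenEigenspace α) (hy : y ∈ d.maxGenEigenspace β) :
    S.bracket x y ∈ d.maxGenEigenspace (α + β) := by
  obtain ⟨p, hp⟩ := (End.mem_maxGenEigenspace _ _ _).mp hx
  obtain ⟨q, hq⟩ := (End.mem_maxGenEigenspace _ _ _).mp hy
  clear hx hy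
  generalize hn : p + q = n
  induction n generalizing p q x y with
  | zero =>
    obtain rfl : p = 0 := by omega
    have : x = 0 := by simpa using hp
    simp [this]
  | succ n ih =>
    have hstep : (d - (α + β) • (1 : End ℂ L)) (S.bracket x y) =
        S.bracket ((d - α • (1 : End ℂ L)) x) y + S.bracket x ((d - β • (1 : End ℂ L)) y) := by
      simp [hd.2.2, add_smul]
      abel
    have hmem : (d - (α + β) • (1 : End ℂ L)) (S.bracket x y) ∈ d.maxGenEigenspace (α + β) := by
      rw [hstep]
      refine add_mem ?_ ?_
      · cases p with
        | zero =>
          have : x = 0 := by simpa using hp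
          simp [this]
        | succ p => exact ih p (by rwa [pow_succ] at hp) q hq (by omega)
      · cases q with
        | zero =>
          have : y = 0 := by simpa using hq
          simp [this]
        | succ q => exact ih p hp q (by rwa [pow_succ] at hq) (by omega)
    obtain ⟨k, hk⟩ := (End.mem_maxGenEigenspace _ _ _).mp hmem
    exact (End.mem_maxGenEigenspace _ _ _).mpr ⟨k + 1, by rwa [pow_succ]⟩

lemma mapsTo_of_mem_adjoin {d s : End ℂ L} (hs : s ∈ Algebra.adjoin ℂ {d}) (p : Submodule ℂ L)
    (hd : ∀ x ∈ p, d x ∈ p) : ∀ x ∈ p, s x ∈ p := by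
  induction hs using Algebra.adjoin_induction with
  | mem x hx => rw [Set.mem_singleton_iff.mp hx]; exact hd
  | algebraMap r => intro x hx; simpa [Algebra.algebraMap_eq_smul_one] using p.smul_mem r hx
  | add x y _ _ hx hy => intro v hv; exact p.add_mem (hx v hv) (hy v hv)
  | mul x y _ _ hx hy => intro v hv; exact hx _ (hy v hv)

variable [FiniteDimensional ℂ L]

/-- The semisimple part of an even superderivation `d` is an even superderivation: it acts by `μ` on
the generalized `μ`-eigenspace of `d`, and these spaces multiply as a grading. -/
lemma exists_semisimplePart {d : End ℂ L} (hd : S.IsEvenDer d) :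
    ∃ s ∈ Algebra.adjoin ℂ {d}, S.IsEvenDer s ∧ SuperAlg.IsDiagonalizable s ∧
      ∀ μ v, v ∈ d.maxGenEigenspace μ → s v = μ • v := by
  obtain ⟨n, hn, s, hs, hnil, hss, hdn⟩ := d.exists_isNilpotent_isSemisimple
  have hcomm : Commute d s := by
    rw [commute_iff_eq]
    exact Algebra.commute_of_mem_adjoin_self hs
  have heig : ∀ μ v, v ∈ d.maxGenEigenspace μ → s v = μ • v := fun μ v hv ↦
    End.apply_eq_of_mem_of_comm_of_isFinitelySemisimple_of_isNil hv hcomm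
      hss.isFinitelySemisimple (by rw [hdn]; simpa)
  refine ⟨s, hs, ⟨mapsTo_of_mem_adjoin hs _ hd.1, mapsTo_of_mem_adjoin hs _ hd.2.1, ?_⟩,
    hss.iSup_eigenspace_eq_top, heig⟩
  obtain ⟨b, hb⟩ := exists_basis_of_iSup _ (End.iSup_maxGenEigenspace_eq_top d)
  choose m hm using hb
  have : S.bracket.compr₂ s = S.bracket.comp s + S.bracket.compl₂ s := by
    refine b.ext fun i ↦ b.ext fun j ↦ ?_
    simp [heig _ _ (hm i), heig _ _ (hm j),
      heig _ _ (bracket_mem_maxGenEigenspace hd (hm i) (hm j)), add_smul]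
  intro x y
  simpa using congrArg (fun g ↦ g x y) this

end Der

/-! ### Weights of maximal tori -/

section Tori
variable {L : Type} [AddCommGroup L] [Module ℂ L] {S : SuperAlg L}

lemma EigIn.conj {m : ℕ} {W : Submodule ℂ (Fin m → ℂ)} {c : End ℂ L} (h : EigIn W c)
    (e : (End ℂ L)ˣ) : EigIn W ((e : End ℂ L) * c * ((e⁻¹ : (End ℂ L)ˣ) : End ℂ L)) := by
  obtain ⟨w, hw, hm⟩ := h
  refine ⟨w, hw, fun μ hμ ↦ hm μ ?_⟩
  obtain ⟨v, hv⟩ := hμ.exists_hasEigenvector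
  have he : ∀ x, ((e⁻¹ : (End ℂ L)ˣ) : End ℂ L) ((e : End ℂ L) x) = x := fun x ↦ by
    rw [← End.mul_apply, Units.inv_mul, End.one_apply]
  have he' : ∀ x, (e : End ℂ L) (((e⁻¹ : (End ℂ L)ˣ) : End ℂ L) x) = x := fun x ↦ by
    rw [← End.mul_apply, Units.mul_inv, End.one_apply]
  refine End.hasEigenvalue_of_hasEigenvector (x := ((e⁻¹ : (End ℂ L)ˣ) : End ℂ L) v)
    ⟨End.mem_eigenspace_iff.mpr ?_, fun h0 ↦ hv.2 ?_⟩
  · have := congrArg ((e⁻¹ : (End ℂ L)ˣ) : End ℂ L) hv.apply_eq_smul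
    simpa [End.mul_apply, he] using this
  · rw [← he' v, h0, map_zero]

variable [FiniteDimensional ℂ L]

/-- For diagonalizable `t`, the space of even superderivations is the sum of the image and the kernel of
`ad t`. These meet trivially because `ad t` has no nilpotent part. -/
lemma exists_commutator_add {t : End ℂ L} (ht : t ∈ evenDer S) (htd : SuperAlg.IsDiagonalizable t)
    {y : End ℂ L} (hy : y ∈ evenDer S) :
    ∃ x ∈ evenDer S, ∃ c ∈ evenDer S, c * t = t * c ∧ x * t - t * x + c = y := by
  let D : evenDer S →ₗ[ℂ] evenDer S :=
    (LinearMap.mulRight ℂ t - LinearMap.mulLeft ℂ t).restrict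
      (fun x hx ↦ evenDer_commutator hx ht)
  have hD : ∀ x : evenDer S, (D x : End ℂ L) = x * t - t * x := fun x ↦ rfl
  have hdis : Disjoint (LinearMap.range D) (LinearMap.ker D) := by
    rw [Submodule.disjoint_def]
    rintro _ ⟨x, rfl⟩ hx
    have h0 : (D x : End ℂ L) * t - t * D x = 0 := by
      rw [← hD, LinearMap.mem_ker.mp hx]; rfl
    obtain ⟨b, hb⟩ := exists_basis_of_iSup _ htd
    refine Subtype.ext (b.ext fun k ↦ ?_)
    obtain ⟨τ, hτ⟩ := hb k
    have ht1 : t (b k) = τ • b k := End.mem_eigenspace_iff.mp hτ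
    have h1 : (t - τ • (1 : End ℂ L)) ((x : End ℂ L) (b k)) = - (D x : End ℂ L) (b k) := by
      simp [hD, ht1]
    have h2 : (t - τ • (1 : End ℂ L)) ((D x : End ℂ L) (b k)) = 0 := by
      have := congrArg (fun g : End ℂ L ↦ g (b k)) h0
      simp only [LinearMap.sub_apply, End.mul_apply, ht1, map_smul, LinearMap.zero_apply] at this
      simpa [sub_eq_zero] using (sub_eq_zero.mp this).symm
    have h3 : (x : End ℂ L) (b k) ∈ t.maxGenEigenspace τ :=
      (End.mem_maxGenEigenspace _ _ _).mpr ⟨2, by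
        rw [pow_two, End.mul_apply, h1, map_neg, h2, neg_zero]⟩
    have h4 := End.mem_eigenspace_iff.mp (maxGenEigenspace_le htd _ h3)
    simpa [h4] using h1.symm
  have htop := Submodule.eq_top_of_disjoint _ _
    (LinearMap.finrank_range_add_finrank_ker D).ge hdis
  obtain ⟨_, ⟨x, rfl⟩, c, hc, hxc⟩ := Submodule.mem_sup.mp
    (htop ▸ Submodule.mem_top : (⟨y, hy⟩ : evenDer S) ∈ LinearMap.range D ⊔ LinearMap.ker D)
  refine ⟨x, x.2, c, c.2, ?_, congrArg Subtype.val hxc⟩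
  rw [← sub_eq_zero, ← hD, LinearMap.mem_ker.mp hc]; rfl

/-- A torus has a joint eigenbasis, on which its weights are linear functionals. -/
lemma exists_weights {T : Submodule ℂ (End ℂ L)} (hT : S.IsTorus T) :
    ∃ (b : Basis (Fin (finrank ℂ L)) ℂ L) (wt : T →ₗ[ℂ] (Fin (finrank ℂ L) → ℂ)),
      ∀ (d : T) k, (d : End ℂ L) (b k) = wt d k • b k := by
  obtain ⟨b, m, hm⟩ := exists_joint_eigenbasis (fun d : T ↦ (d : End ℂ L))
    (fun d e ↦ hT.2.1 d d.2 e e.2) (fun d ↦ hT.2.2 d d.2)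
  refine ⟨b, LinearMap.pi fun k ↦ (b.coord k) ∘ₗ (LinearMap.applyₗ (b k)) ∘ₗ T.subtype,
    fun d k ↦ ?_⟩
  have := hm k d
  simp [this]

/-- A torus contains an element with the same centralizer as the whole torus, namely one on which
distinct weights take distinct values. -/
lemma exists_generic {T : Submodule ℂ (End ℂ L)} (hT : S.IsTorus T) :
    ∃ t ∈ T, ∀ c : End ℂ L, c * t = t * c → ∀ d ∈ T, c * d = d * c := by
  obtain ⟨b, wt, hwt⟩ := exists_weights hT
  -- `F (i, j)` is the difference of the `i`-th and the `j`-th weight.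
  let F (p : Fin (finrank ℂ L) × Fin (finrank ℂ L)) : Module.Dual ℂ T :=
    LinearMap.proj p.1 ∘ₗ wt - LinearMap.proj p.2 ∘ₗ wt
  obtain ⟨t, -, ht⟩ := Module.Dual.exists_forall_mem_ne_zero_of_forall_exists (⊤ : Submodule ℂ T)
    (fun p : {p // F p ≠ 0} ↦ F p) (fun p ↦ by
      by_contra! h
      exact p.2 (LinearMap.ext fun x ↦ h x trivial))
  refine ⟨t, t.2, fun c hc d hd ↦ b.ext fun j ↦ b.ext_elem fun i ↦ ?_⟩
  have key : ∀ d : T, b.repr ((c * (d : End ℂ L)) (b j)) i - b.repr (((d : End ℂ L) * c) (b j)) i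
      = - F (i, j) d * b.repr (c (b j)) i := fun d ↦ by
    rw [End.mul_apply, End.mul_apply, hwt d j, eigenbasis_repr b (hwt d)]
    simp [F]; ring
  rw [← sub_eq_zero]
  refine (key ⟨d, hd⟩).trans ?_
  by_cases hF : F (i, j) = 0
  · simp [hF]
  · have h1 := key t
    rw [hc, sub_self] at h1
    have h2 : b.repr (c (b j)) i = 0 := by
      simpa [ht ⟨(i, j), hF⟩] using h1.symm
    rw [h2, mul_zero]

/-- A maximal torus contains every diagonalizable even superderivation commuting with it. -/
lemma mem_maxTorus {T : Submodule ℂ (End ℂ L)} (hT : S.IsMaxTorus T) {s : End ℂ L}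
    (hs : S.IsEvenDer s) (hsd : SuperAlg.IsDiagonalizable s) (hc : ∀ d ∈ T, Commute s d) :
    s ∈ T := by
  have hcT : ∀ d ∈ T, ∀ e ∈ T, Commute d e := hT.1.2.1
  obtain ⟨b, m, hm⟩ := exists_joint_eigenbasis (fun d : Option T ↦ d.elim s Subtype.val)
    (by
      rintro (_ | d) (_ | e)
      · exact Commute.refl s
      · exact hc e e.2
      · exact (hc d d.2).symm
      · exact hcT d d.2 e e.2)
    (by
      rintro (_ | d)
      · exact hsd
      · exact hT.1.2.2 d d.2)
  have hmem : ∀ x ∈ T ⊔ span ℂ {s}, ∃ d ∈ T, ∃ a : ℂ, x = d + a • s := by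
    intro x hx
    obtain ⟨d, hd, y, hy, rfl⟩ := mem_sup.mp hx
    obtain ⟨a, rfl⟩ := mem_span_singleton.mp hy
    exact ⟨d, hd, a, rfl⟩
  have hT' : S.IsTorus (T ⊔ span ℂ {s}) := by
    refine ⟨fun x hx ↦ ?_, fun x hx y hy ↦ ?_, fun x hx ↦ ?_⟩
    · have : T ⊔ span ℂ {s} ≤ evenDer S :=
        sup_le hT.1.1 ((span_singleton_le_iff_mem _ _).mpr hs)
      exact this hx
    · obtain ⟨d, hd, a, rfl⟩ := hmem x hx
      obtain ⟨e, he, a', rfl⟩ := hmem y hy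
      exact ((hcT d hd e he).add_right ((hc d hd).symm.smul_right a')).add_left
        (((hc e he).add_right ((Commute.refl s).smul_right a')).smul_left a)
    · obtain ⟨d, hd, a, rfl⟩ := hmem x hx
      refine isDiagonalizable_of_basis b (m := fun k ↦ m k (some ⟨d, hd⟩) + a * m k none)
        fun k ↦ ?_
      have h1 : d (b k) = _ := hm k (some ⟨d, hd⟩)
      have h2 : s (b k) = _ := hm k none
      rw [LinearMap.add_apply, LinearMap.smul_apply, h1, h2, add_smul, mul_smul]
  rw [← hT.2 _ hT' le_sup_left]
  exact mem_sup_right (mem_span_singleton_self s)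

/-- The semisimple part of a derivation `c` commuting with a maximal torus `T` lies in `T`, and each
eigenvalue of `c` is one of its weights. -/
lemma eigIn_of_commute {T : Submodule ℂ (End ℂ L)} (hT : S.IsMaxTorus T)
    (b : Basis (Fin (finrank ℂ L)) ℂ L) (wt : T →ₗ[ℂ] (Fin (finrank ℂ L) → ℂ))
    (hwt : ∀ (d : T) k, (d : End ℂ L) (b k) = wt d k • b k)
    {c : End ℂ L} (hc : S.IsEvenDer c) (hcT : ∀ d ∈ T, c * d = d * c) :
    EigIn (LinearMap.range wt) c := by
  obtain ⟨s, hs, hsder, hsd, hsv⟩ := exists_semisimplePart hc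
  have hsT : s ∈ T := mem_maxTorus hT hsder hsd fun d hd ↦
    (Algebra.commute_of_mem_adjoin_singleton_of_commute hs (show Commute d c from (hcT d hd).symm)).symm
  refine ⟨wt ⟨s, hsT⟩, ⟨_, rfl⟩, fun μ hμ ↦ ?_⟩
  obtain ⟨v, hv⟩ := hμ.exists_hasEigenvector
  have h1 : s v = μ • v := hsv μ v <|
    (End.mem_maxGenEigenspace _ _ _).mpr ⟨1, by simp [hv.apply_eq_smul]⟩
  obtain ⟨k, hk⟩ : ∃ k, b.repr v k ≠ 0 := by
    by_contra! h
    exact hv.2 (b.ext_elem fun k ↦ by simp [h k])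
  refine ⟨k, ?_⟩
  have h2 := eigenbasis_repr b (hwt ⟨s, hsT⟩) v k
  simp only [h1, map_smul, Finsupp.smul_apply, smul_eq_mul] at h2
  exact mul_right_cancel₀ hk h2

/-- The eigenvalues of any even superderivation occur among the coordinates of one weight vector of a
given maximal torus. -/
lemma eigIn_of_evenDer {T : Submodule ℂ (End ℂ L)} (hT : S.IsMaxTorus T)
    (b : Basis (Fin (finrank ℂ L)) ℂ L) (wt : T →ₗ[ℂ] (Fin (finrank ℂ L) → ℂ))
    (hwt : ∀ (d : T) k, (d : End ℂ L) (b k) = wt d k • b k)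
    {y : End ℂ L} (hy : S.IsEvenDer y) : EigIn (LinearMap.range wt) y := by
  obtain ⟨t, htT, ht⟩ := exists_generic hT.1
  -- Any algebra norm will do; the operator norm on matrices is transported to `End ℂ L`.
  let φ := LinearMap.toMatrixAlgEquiv b
  let _ : NormedRing (Matrix (Fin (finrank ℂ L)) (Fin (finrank ℂ L)) ℂ) :=
    Matrix.linftyOpNormedRing
  let _ : NormedAlgebra ℂ (Matrix (Fin (finrank ℂ L)) (Fin (finrank ℂ L)) ℂ) :=
    Matrix.linftyOpNormedAlgebra
  let _ : NormedRing (End ℂ L) := NormedRing.induced _ _ φ φ.injective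
  let _ : NormedAlgebra ℂ (End ℂ L) := NormedAlgebra.induced ℂ _ _ φ
  have : CompleteSpace (End ℂ L) := FiniteDimensional.complete ℂ _
  let c₀ : Submodule ℂ (End ℂ L) := evenDer S ⊓
    LinearMap.ker (LinearMap.mulRight ℂ t - LinearMap.mulLeft ℂ t)
  have hc₀ : ∀ c, c ∈ c₀ ↔ S.IsEvenDer c ∧ c * t = t * c := fun c ↦ by
    simp [c₀, mem_evenDer, sub_eq_zero]
  have htder := hT.1.1 t htT
  have hev := eventually_conj (evenDer S) (fun x hx y hy ↦ evenDer_commutator hx hy) c₀ inf_le_left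
    ((hc₀ t).mpr ⟨htder, rfl⟩)
    (fun y hy ↦ by
      obtain ⟨x, hx, c, hc, hct, h⟩ := exists_commutator_add (y := y) htder (hT.1.2.2 t htT) hy
      exact ⟨x, hx, c, (hc₀ c).mpr ⟨hc, hct⟩, h⟩)
    (u := y - t) ((evenDer S).sub_mem hy htder)
  have h1 := EigIn.of_line t (y - t) {z | ∃ c ∈ c₀, ∃ e : (End ℂ L)ˣ,
      t + z • (y - t) = e * c * (e⁻¹ : (End ℂ L)ˣ)} (infinite_of_mem_nhds 0 hev)
    (W := LinearMap.range wt) (by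
      rintro z ⟨c, hc, e, h⟩
      rw [h]
      have := (hc₀ c).mp hc
      exact (eigIn_of_commute hT b wt hwt this.1 (ht c this.2)).conj e) 1
  simpa using h1

/-- The dimension of a torus is at most that of any maximal torus. -/
lemma finrank_le {T₁ T₂ : Submodule ℂ (End ℂ L)} (h₁ : S.IsTorus T₁) (h₂ : S.IsMaxTorus T₂) :
    finrank ℂ T₁ ≤ finrank ℂ T₂ := by
  obtain ⟨b₁, wt₁, hwt₁⟩ := exists_weights h₁
  obtain ⟨b₂, wt₂, hwt₂⟩ := exists_weights h₂.1
  -- `p f` consists of those `y` whose weight vector has the form `w ∘ f` with `w` a weight vector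
  -- of `T₂`.
  let p (f : Fin (finrank ℂ L) → Fin (finrank ℂ L)) : Submodule ℂ T₁ :=
    ((LinearMap.range wt₂).map (LinearMap.funLeft ℂ ℂ f)).comap wt₁
  obtain ⟨f, hf⟩ : ∃ f, p f = ⊤ := by
    by_contra! h
    obtain ⟨y, hy⟩ := Submodule.exists_forall_notMem_of_forall_ne_top p h
    obtain ⟨w, hw, hwy⟩ := eigIn_of_evenDer h₂ b₂ wt₂ hwt₂ (h₁.1 y y.2)
    choose f hf using fun k ↦ hwy (wt₁ y k) (End.hasEigenvalue_of_hasEigenvector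
      ⟨End.mem_eigenspace_iff.mpr (hwt₁ y k), b₁.ne_zero k⟩)
    exact hy f ⟨w, hw, funext fun k ↦ (hf k).symm⟩
  have hinj : Function.Injective wt₁ := by
    intro d e hde
    exact Subtype.ext (b₁.ext fun k ↦ by rw [hwt₁, hwt₁, hde])
  calc finrank ℂ T₁ = finrank ℂ (LinearMap.range wt₁) := (LinearMap.finrank_range_of_inj hinj).symm
    _ ≤ finrank ℂ ((LinearMap.range wt₂).map (LinearMap.funLeft ℂ ℂ f)) := by
        refine Submodule.finrank_mono ?_
        rintro _ ⟨d, rfl⟩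
        have : d ∈ p f := hf ▸ Submodule.mem_top
        exact this
    _ ≤ finrank ℂ (LinearMap.range wt₂) := Submodule.finrank_map_le _ _
    _ ≤ finrank ℂ T₂ := LinearMap.finrank_range_le _

end Tori

end MaxTori

/-- Any two maximal tori of a finite-dimensional complex nilpotent Lie
superalgebra have the same dimension. -/
theorem maxTori_finrank_eq
    {L : Type} [AddCommGroup L] [Module ℂ L] [FiniteDimensional ℂ L] (S : SuperAlg L)
    (hnil : S.IsNilpotent)
    (T₁ T₂ : Submodule ℂ (L →ₗ[ℂ] L))
    (h₁ : S.IsMaxTorus T₁) (h₂ : S.IsMaxTorus T₂) :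
    Module.finrank ℂ ↥T₁ = Module.finrank ℂ ↥T₂ := by
  exact le_antisymm (MaxTori.finrank_le h₁.1 h₂) (MaxTori.finrank_le h₂.1 h₁)
end

section
/- Let N = N₀ ⊕ N₁ be a finite-dimensional nilpotent Lie superalgebra and D an even superderivation of N. Since D preserves N² and each graded component, D induces endomorphisms of N₀/(N₀² + [N₁,N₁]) and of N₁/[N₁,N₀]. Then D is nilpotent if and only if both induced endomorphisms are nilpotent. -/
/-!
Write `C k` for the descending central series of `N`, with `C 0 = N` and `C 1 = N²`. If both
induced endomorphisms are nilpotent, some power of `D` maps `N` into `C 1`. This propagates down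
the series: if `D ^ p` maps `C k` into `C (k + 1)` and `D ^ q` maps `N` into `C 1`, then expanding
`D ^ (p + q) [x, y]` for `x ∈ C k` by the Leibniz rule gives terms lying in `[C (k + 1), N]` or in
`[C k, C 1]`. The former is `C (k + 2)` by definition, and the latter lies in `C (k + 2)` by the
super Jacobi identity (`SuperAlg.bracket_mem_lcsIn_add_two`), which can be applied because every
`C k` is graded (`SuperAlg.lcsIn_graded`). Since `C s = 0` for some `s`, a power of `D` vanishes.
The converse is immediate.
-/


open Submodule Module

namespace SuperAlg

variable {L : Type} [AddCommGroup L] [Module ℂ L] (S : SuperAlg L)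

theorem exists_even_add_odd (x : L) : ∃ a ∈ S.even, ∃ b ∈ S.odd, a + b = x :=
  Submodule.mem_sup.1 (S.grading_sup ▸ Submodule.mem_top)

theorem bracket_mem_lcsIn_succ_s16 {k : ℕ} {x : L} (hx : x ∈ S.lcsIn ⊤ k) (y : L) :
    S.bracket x y ∈ S.lcsIn ⊤ (k + 1) :=
  Submodule.apply_mem_map₂ _ hx Submodule.mem_top

/-- Each term of the descending central series contains the homogeneous components of its
elements. -/
theorem lcsIn_graded (k : ℕ) : ∀ x ∈ S.lcsIn ⊤ k,
    ∃ a ∈ S.lcsIn ⊤ k ⊓ S.even, ∃ b ∈ S.lcsIn ⊤ k ⊓ S.odd, a + b = x := by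
  induction k with
  | zero =>
    intro x _
    obtain ⟨a, ha, b, hb, h⟩ := S.exists_even_add_odd x
    exact ⟨a, ⟨Submodule.mem_top, ha⟩, b, ⟨Submodule.mem_top, hb⟩, h⟩
  | succ k ih =>
    have key : S.lcsIn ⊤ (k + 1) ≤
        (S.lcsIn ⊤ (k + 1) ⊓ S.even) ⊔ (S.lcsIn ⊤ (k + 1) ⊓ S.odd) := by
      refine Submodule.map₂_le.2 fun x hx y _ => ?_
      obtain ⟨a, ⟨ha, ha'⟩, b, ⟨hb, hb'⟩, rfl⟩ := ih x hx
      obtain ⟨c, hc, d, hd, rfl⟩ := S.exists_even_add_odd y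
      refine Submodule.mem_sup.2
        ⟨S.bracket a c + S.bracket b d, ⟨?_, ?_⟩, S.bracket a d + S.bracket b c, ⟨?_, ?_⟩, ?_⟩
      · exact add_mem (S.bracket_mem_lcsIn_succ_s16 ha c) (S.bracket_mem_lcsIn_succ_s16 hb d)
      · exact add_mem (S.bk_ee _ ha' _ hc) (S.bk_oo _ hb' _ hd)
      · exact add_mem (S.bracket_mem_lcsIn_succ_s16 ha d) (S.bracket_mem_lcsIn_succ_s16 hb c)
      · exact add_mem (S.bk_eo _ ha' _ hd) (S.bk_oe _ hb' _ hc)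
      · simp only [map_add, LinearMap.add_apply]
        abel
    exact fun x hx => Submodule.mem_sup.1 (key hx)

/-- Super skew-symmetry exchanges the two arguments only up to a sign depending on parity, so the
components of `x` and `y` are treated separately. -/
theorem bracket_mem_lcsIn_succ' {k : ℕ} {x : L} (hx : x ∈ S.lcsIn ⊤ k) (y : L) :
    S.bracket y x ∈ S.lcsIn ⊤ (k + 1) := by
  obtain ⟨a, ⟨ha, ha'⟩, b, ⟨hb, hb'⟩, rfl⟩ := S.lcsIn_graded k x hx
  obtain ⟨c, hc, d, hd, rfl⟩ := S.exists_even_add_odd y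
  have h1 : S.bracket c (a + b) = -S.bracket (a + b) c := S.skew_e _ _ (Or.inl hc)
  have h2 : S.bracket d a = -S.bracket a d := S.skew_e _ _ (Or.inr ha')
  have h3 : S.bracket d b = S.bracket b d := S.skew_oo _ hd _ hb'
  rw [map_add S.bracket c d, LinearMap.add_apply, h1, map_add (S.bracket d), h2, h3]
  exact add_mem (neg_mem (S.bracket_mem_lcsIn_succ_s16 hx c))
    (add_mem (neg_mem (S.bracket_mem_lcsIn_succ_s16 ha d)) (S.bracket_mem_lcsIn_succ_s16 hb d))

/-- The inclusion `[C k, C 1] ⊆ C (k + 2)`: modulo signs, the super Jacobi identity rewrites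
`[x, [a, b]]` in terms of `[a, [b, x]]` and `[b, [x, a]]`. -/
theorem bracket_mem_lcsIn_add_two {k : ℕ} {x y : L} (hx : x ∈ S.lcsIn ⊤ k)
    (hy : y ∈ S.lcsIn ⊤ 1) : S.bracket x y ∈ S.lcsIn ⊤ (k + 2) := by
  have hom : ∀ (dx da db : Bool) (x a b : L), x ∈ S.lcsIn ⊤ k →
      x ∈ (if dx then S.odd else S.even) → a ∈ (if da then S.odd else S.even) →
      b ∈ (if db then S.odd else S.even) →
      S.bracket x (S.bracket a b) ∈ S.lcsIn ⊤ (k + 2) := by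
    intro dx da db x a b hx hdx hda hdb
    have h1 : S.bracket a (S.bracket b x) ∈ S.lcsIn ⊤ (k + 2) :=
      S.bracket_mem_lcsIn_succ' (S.bracket_mem_lcsIn_succ' hx b) a
    have h2 : S.bracket b (S.bracket x a) ∈ S.lcsIn ⊤ (k + 2) :=
      S.bracket_mem_lcsIn_succ' (S.bracket_mem_lcsIn_succ_s16 hx a) b
    have hj := S.jacobi dx da db x a b hdx hda hdb
    rw [add_assoc, add_eq_zero_iff_eq_neg] at hj
    have h3 := neg_mem (add_mem
      (Submodule.smul_mem _ (if dx && da then (-1 : ℂ) else 1) h1)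
      (Submodule.smul_mem _ (if da && db then (-1 : ℂ) else 1) h2))
    rw [← hj] at h3
    refine (Submodule.smul_mem_iff _ ?_).1 h3
    split_ifs <;> norm_num
  have hy' : S.lcsIn ⊤ 1 ≤ (S.lcsIn ⊤ (k + 2)).comap (S.bracket x) := by
    refine Submodule.map₂_le.2 fun a _ b _ => ?_
    obtain ⟨x0, ⟨hx0, hx0'⟩, x1, ⟨hx1, hx1'⟩, rfl⟩ := S.lcsIn_graded k x hx
    obtain ⟨a0, ha0, a1, ha1, rfl⟩ := S.exists_even_add_odd a
    obtain ⟨b0, hb0, b1, hb1, rfl⟩ := S.exists_even_add_odd b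
    simp only [Submodule.mem_comap, map_add, LinearMap.add_apply]
    have e0 := fun da db a b => hom false da db x0 a b hx0 hx0'
    have e1 := fun da db a b => hom true da db x1 a b hx1 hx1'
    have f00 := e0 false false a0 b0 ha0 hb0
    have f01 := e0 false true a0 b1 ha0 hb1
    have f10 := e0 true false a1 b0 ha1 hb0
    have f11 := e0 true true a1 b1 ha1 hb1
    have g00 := e1 false false a0 b0 ha0 hb0
    have g01 := e1 false true a0 b1 ha0 hb1
    have g10 := e1 true false a1 b0 ha1 hb0
    have g11 := e1 true true a1 b1 ha1 hb1
    repeat' apply add_mem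
    all_goals assumption
  exact hy' hy

variable {S} {D : L →ₗ[ℂ] L}

theorem IsEvenDer.map_lcsIn (hD : S.IsEvenDer D) (k : ℕ) :
    ∀ x ∈ S.lcsIn ⊤ k, D x ∈ S.lcsIn ⊤ k := by
  induction k with
  | zero => exact fun _ _ => Submodule.mem_top
  | succ k ih =>
    have h : S.lcsIn ⊤ (k + 1) ≤ (S.lcsIn ⊤ (k + 1)).comap D := by
      refine Submodule.map₂_le.2 fun x hx y _ => ?_
      rw [Submodule.mem_comap, hD.2.2]
      exact add_mem (S.bracket_mem_lcsIn_succ_s16 (ih x hx) y) (S.bracket_mem_lcsIn_succ_s16 hx _)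
    exact h

theorem IsEvenDer.pow_map_lcsIn (hD : S.IsEvenDer D) (k n : ℕ) {x : L}
    (hx : x ∈ S.lcsIn ⊤ k) : (D ^ n) x ∈ S.lcsIn ⊤ k := by
  induction n with
  | zero => simpa using hx
  | succ n ih =>
    rw [pow_succ', Module.End.mul_apply]
    exact hD.map_lcsIn k _ ih

/-- The consequence of the Leibniz formula for `D ^ (p + q)` needed here, obtained without
binomial coefficients by peeling off one factor `D` at a time. -/
theorem IsEvenDer.pow_bracket_mem (hD : S.IsEvenDer D) {k : ℕ} (p q : ℕ) :
    ∀ x y : L, x ∈ S.lcsIn ⊤ k → (D ^ p) x ∈ S.lcsIn ⊤ (k + 1) →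
      (D ^ q) y ∈ S.lcsIn ⊤ 1 → (D ^ (p + q)) (S.bracket x y) ∈ S.lcsIn ⊤ (k + 2) := by
  induction p generalizing q with
  | zero =>
    intro x y _ hx' _
    exact hD.pow_map_lcsIn _ _ (S.bracket_mem_lcsIn_succ_s16 (by simpa using hx') y)
  | succ p ihp =>
    induction q with
    | zero =>
      intro x y hx _ hy
      exact hD.pow_map_lcsIn _ _ (S.bracket_mem_lcsIn_add_two hx (by simpa using hy))
    | succ q ihq =>
      intro x y hx hx' hy
      rw [← add_assoc, pow_succ, Module.End.mul_apply, hD.2.2, map_add]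
      refine add_mem ?_ (ihq x (D y) hx hx' ?_)
      · rw [add_right_comm, add_assoc]
        refine ihp (q + 1) (D x) y (hD.map_lcsIn k x hx) ?_ hy
        rwa [pow_succ, Module.End.mul_apply] at hx'
      · rwa [pow_succ, Module.End.mul_apply] at hy

/-- If a power of `D` maps `N` into `N²`, then a power of `D` maps each term of the descending
central series into the next. -/
theorem IsEvenDer.exists_pow_map_lcsIn_succ (hD : S.IsEvenDer D) {q : ℕ}
    (hq : ∀ x, (D ^ q) x ∈ S.lcsIn ⊤ 1) (k : ℕ) :
    ∃ p, ∀ x ∈ S.lcsIn ⊤ k, (D ^ p) x ∈ S.lcsIn ⊤ (k + 1) := by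
  induction k with
  | zero => exact ⟨q, fun x _ => hq x⟩
  | succ k ih =>
    obtain ⟨p, hp⟩ := ih
    have h : S.lcsIn ⊤ (k + 1) ≤ (S.lcsIn ⊤ (k + 2)).comap (D ^ (p + q)) :=
      Submodule.map₂_le.2 fun x hx y _ => hD.pow_bracket_mem p q x y hx (hp x hx) (hq y)
    exact ⟨p + q, h⟩

theorem IsEvenDer.exists_pow_mem_lcsIn (hD : S.IsEvenDer D) {q : ℕ}
    (hq : ∀ x, (D ^ q) x ∈ S.lcsIn ⊤ 1) (k : ℕ) : ∃ n, ∀ x, (D ^ n) x ∈ S.lcsIn ⊤ k := by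
  induction k with
  | zero => exact ⟨0, fun _ => Submodule.mem_top⟩
  | succ k ih =>
    obtain ⟨n, hn⟩ := ih
    obtain ⟨p, hp⟩ := hD.exists_pow_map_lcsIn_succ hq k
    refine ⟨p + n, fun x => ?_⟩
    rw [pow_add, Module.End.mul_apply]
    exact hp _ (hn x)

end SuperAlg

/-- An even superderivation `D` of a finite-dimensional nilpotent Lie
superalgebra `N` is nilpotent if and only if the endomorphisms it induces on
`N₀/(N₀² + [N₁,N₁])` and on `N₁/[N₁,N₀]` are both nilpotent (an induced endomorphism on
such a quotient is nilpotent precisely when some power of `D` maps the subspace into the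
subspace divided out). -/
theorem evenDer_nilpotent_iff_induced_nilpotent
    {L : Type} [AddCommGroup L] [Module ℂ L] [FiniteDimensional ℂ L] (S : SuperAlg L)
    (hnil : S.IsNilpotent)
    (D : L →ₗ[ℂ] L) (hD : S.IsEvenDer D) :
    IsNilpotent D ↔
      ((∃ k, ∀ x ∈ S.even, (D ^ k) x ∈ S.bk S.even S.even ⊔ S.bk S.odd S.odd) ∧
       (∃ k, ∀ y ∈ S.odd, (D ^ k) y ∈ S.bk S.odd S.even)) := by
  constructor
  · rintro ⟨n, hn⟩
    exact ⟨⟨n, fun x _ => by simp [hn]⟩, ⟨n, fun x _ => by simp [hn]⟩⟩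
  · rintro ⟨⟨m, hm⟩, ⟨n, hn⟩⟩
    have hle : ∀ A B : Submodule ℂ L, S.bk A B ≤ S.lcsIn ⊤ 1 :=
      fun A B => Submodule.map₂_le_map₂ le_top le_top
    have hq : ∀ x, (D ^ (m + n)) x ∈ S.lcsIn ⊤ 1 := by
      intro x
      obtain ⟨a, ha, b, hb, rfl⟩ := S.exists_even_add_odd x
      rw [map_add]
      refine add_mem ?_ ?_
      · rw [add_comm, pow_add, Module.End.mul_apply]
        exact hD.pow_map_lcsIn 1 n (sup_le (hle _ _) (hle _ _) (hm a ha))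
      · rw [pow_add, Module.End.mul_apply]
        exact hD.pow_map_lcsIn 1 m (hle _ _ (hn b hb))
    obtain ⟨s, hs⟩ := hnil
    obtain ⟨N, hN⟩ := hD.exists_pow_mem_lcsIn hq s
    refine ⟨N, LinearMap.ext fun x => ?_⟩
    simpa [hs] using hN x
end
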